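/- arXiv:1707.00038 — 3 statements merged into one kernel-verified Lean document; each statement's English description precedes it below -/
import Mathlib

section
/- Let N ≥ 1, β > 0, I ∈ ℝ, and L, R, γ ≥ 0. Suppose {φ₁, …, φ_N, Q} is a twice continuously differentiable solution of the Josephson junction system with LRC load, and suppose it is a single waveform solution: there exist a running function φ of period T > 0 and numbers 0 = ρ₁ ≤ ρ₂ ≤ … ≤ ρ_N < 1 such that φ_j(t) = φ(t − ρ_j T) for all t and all j = 1, …, N. Then the load current Q̇ satisfies Q̇(t + ρ_j T) = Q̇(t) for every j = 1, …, N and every t ∈ ℝ, and the right-hand side η(t) = (1/N) Σ_{j=1}^N φ̇(t − ρ_j T) of the load equation satisfies η(t + ρ_j T) = η(t) for every j and t. -/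
open Real

/-- `φ` is a running function of period `T`: `φ (t + T) = φ t + 2π` for all `t`. -/
def IsRunning (φ : ℝ → ℝ) (T : ℝ) : Prop :=
  ∀ t : ℝ, φ (t + T) = φ t + 2 * Real.pi

/-- The Josephson junction system with LRC load:
`β φ_k'' + φ_k' + sin (φ_k) + Q' = I` for each junction `k`, together with the load
equation `L Q'' + R Q' + γ Q = (1/N) ∑_j φ_j'`. -/
def JJSystem (N : ℕ) (β I L R γ : ℝ) (φ : Fin N → ℝ → ℝ) (Q : ℝ → ℝ) : Prop :=
  (∀ k : Fin N, ∀ t : ℝ,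
      β * deriv (deriv (φ k)) t + deriv (φ k) t + Real.sin (φ k t) + deriv Q t = I) ∧
  (∀ t : ℝ,
      L * deriv (deriv Q) t + R * deriv Q t + γ * Q t
        = (1 / (N : ℝ)) * ∑ j : Fin N, deriv (φ j) t)

/-- For a single waveform solution of the Josephson junction system with LRC load,
the load current `Q'` and the right-hand side `η` of the load equation have each of
the delays `ρ j * T` as a period. -/
theorem swfs_load_current_periods (N : ℕ) (hN : 1 ≤ N)
    (β I L R γ : ℝ) (hβ : 0 < β) (hL : 0 ≤ L) (hR : 0 ≤ R) (hγ : 0 ≤ γ)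
    (φfam : Fin N → ℝ → ℝ) (Q : ℝ → ℝ)
    (hsmooth : ∀ k : Fin N, ContDiff ℝ 2 (φfam k)) (hQsmooth : ContDiff ℝ 2 Q)
    (hsys : JJSystem N β I L R γ φfam Q)
    (φ : ℝ → ℝ) (T : ℝ) (hT : 0 < T) (hrun : IsRunning φ T)
    (ρ : Fin N → ℝ)
    (hρ0 : ρ ⟨0, hN⟩ = 0) (hρmono : Monotone ρ)
    (hρnonneg : ∀ j, 0 ≤ ρ j) (hρlt : ∀ j, ρ j < 1)
    (hswfs : ∀ j : Fin N, ∀ t : ℝ, φfam j t = φ (t - ρ j * T)) :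
    (∀ j : Fin N, ∀ t : ℝ, deriv Q (t + ρ j * T) = deriv Q t) ∧
    (∀ j : Fin N, ∀ t : ℝ,
      (1 / (N : ℝ)) * ∑ i : Fin N, deriv φ (t + ρ j * T - ρ i * T)
        = (1 / (N : ℝ)) * ∑ i : Fin N, deriv φ (t - ρ i * T)) := by
  obtain ⟨h1, h2⟩ := hsys
  have hφ : φfam ⟨0, hN⟩ = φ := by
    funext t
    rw [hswfs, hρ0]
    simp
  have hφs : ContDiff ℝ 2 φ := hφ ▸ hsmooth ⟨0, hN⟩
  have hφd : Differentiable ℝ φ := hφs.differentiable (by norm_num)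
  have hQd : Differentiable ℝ Q := hQsmooth.differentiable (by norm_num)
  have hfam : ∀ j, φfam j = fun t => φ (t - ρ j * T) := fun j => funext (hswfs j)
  have hd1 : ∀ j, deriv (φfam j) = fun t => deriv φ (t - ρ j * T) := by
    intro j
    funext t
    rw [hfam j, deriv_comp_sub_const]
  have hd2 : ∀ j t, deriv (deriv (φfam j)) t = deriv (deriv φ) (t - ρ j * T) := by
    intro j t
    rw [hd1 j, deriv_comp_sub_const]
  have hQ : ∀ j : Fin N, ∀ t : ℝ, deriv Q (t + ρ j * T) = deriv Q t := by
    intro j t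
    have e1 := h1 j (t + ρ j * T)
    have e0 := h1 ⟨0, hN⟩ t
    rw [hd2, hd1, hswfs] at e1
    rw [hφ] at e0
    simp only [add_sub_cancel_right] at e1
    linarith
  refine ⟨hQ, ?_⟩
  intro j
  have hη : ∀ t, L * deriv (deriv Q) t + R * deriv Q t + γ * Q t
      = (1 / (N : ℝ)) * ∑ i : Fin N, deriv φ (t - ρ i * T) := by
    intro t
    rw [h2 t]
    simp only [hd1]
  set s := ρ j * T with hs
  have hQ2 : ∀ t, deriv (deriv Q) (t + s) = deriv (deriv Q) t := by
    intro t
    rw [← deriv_comp_add_const]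
    congr 1
    funext u
    exact hQ j u
  have hc : ∀ t, Q (t + s) - Q t = Q (0 + s) - Q 0 := by
    have hdiff : Differentiable ℝ (fun t => Q (t + s) - Q t) := by fun_prop
    intro t
    refine is_const_of_deriv_eq_zero hdiff (fun u => ?_) t 0
    rw [deriv_fun_sub (by fun_prop) (by fun_prop), deriv_comp_add_const, hQ j u, sub_self]
  have hK : ∀ t, (1 / (N : ℝ)) * ∑ i : Fin N, deriv φ (t + s - ρ i * T)
        - (1 / (N : ℝ)) * ∑ i : Fin N, deriv φ (t - ρ i * T) = γ * (Q (0 + s) - Q 0) := by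
    intro t
    rw [← hη, ← hη, hQ2, hQ j, ← hc t]
    ring
  -- Rolle for the antiderivative
  let G : ℝ → ℝ := fun t => (1 / (N : ℝ)) * ∑ i : Fin N, φ (t + s - ρ i * T)
        - (1 / (N : ℝ)) * ∑ i : Fin N, φ (t - ρ i * T)
  have hG : ∀ t, HasDerivAt G ((1 / (N : ℝ)) * ∑ i : Fin N, deriv φ (t + s - ρ i * T)
        - (1 / (N : ℝ)) * ∑ i : Fin N, deriv φ (t - ρ i * T)) t := by
    intro t
    refine HasDerivAt.sub (HasDerivAt.const_mul _ ?_) (HasDerivAt.const_mul _ ?_)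
    · refine HasDerivAt.fun_sum fun i _ => ?_
      have := (hφd (t + (s - ρ i * T))).hasDerivAt.comp_add_const t (s - ρ i * T)
      simpa only [add_sub_assoc] using this
    · refine HasDerivAt.fun_sum fun i _ => ?_
      exact (hφd (t - ρ i * T)).hasDerivAt.comp_sub_const t (ρ i * T)
  have hG0 : G 0 = G T := by
    have a1 : ∀ i : Fin N, φ (T + s - ρ i * T) = φ (0 + s - ρ i * T) + 2 * Real.pi := by
      intro i
      rw [← hrun]
      congr 1
      ring
    have a2 : ∀ i : Fin N, φ (T - ρ i * T) = φ (0 - ρ i * T) + 2 * Real.pi := by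
      intro i
      rw [← hrun]
      congr 1
      ring
    simp only [G, a1, a2, Finset.sum_add_distrib]
    ring
  obtain ⟨c, -, hc0⟩ := exists_hasDerivAt_eq_zero hT
    (fun t _ => (hG t).continuousAt.continuousWithinAt) hG0 (fun t _ => hG t)
  intro t
  have := hK t
  have := hK c
  linarith
end

section
/- (Theorem 1, Aronson–Huang) Let N ≥ 1 and let M be a divisor of N with l = N/M. Assume I > 1, β > 0, R ≥ 0, L ≥ 0, γ ≥ 0 with R + γ > 0. Then there exist T > 0, a running function φ of period T, and a twice continuously differentiable function Q with Q' periodic of period T/M, such that β φ'' + φ' + sin(φ) + Q' = I and L Q'' + R Q' + γ Q = (l/N) Σ_{j=1}^{M} φ'(t − (j−1)T/M) for all t; that is, setting φ_j(t) = φ(t − hT/M) for j = hl+1, …, (h+1)l and h = 0, 1, …, M−1, the tuple {φ₁, …, φ_N, Q} is an (l, M, N) single waveform solution of the Josephson junction system with LRC load. -/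
open Real

section Brouwer
open MeasureTheory Metric Set Polynomial

/-- Polynomial dependence of `det (1 + tA)` on `t`, via Lagrange interpolation at fixed nodes. -/
lemma jj_det_interp {E : Type*} [NormedAddCommGroup E] [NormedSpace ℝ E] [FiniteDimensional ℝ E]
    (v : ℕ → ℝ) (hv : Function.Injective v) (A : E →L[ℝ] E) (t : ℝ) :
    (ContinuousLinearMap.id ℝ E + t • A).det =
      ∑ i ∈ Finset.range (Module.finrank ℝ E + 1),
        (ContinuousLinearMap.id ℝ E + v i • A).det *
          (Lagrange.basis (Finset.range (Module.finrank ℝ E + 1)) v i).eval t := by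
  classical
  set b := Module.finBasis ℝ E
  set m := LinearMap.toMatrix b b (A : E →ₗ[ℝ] E) with hm
  set p : ℝ[X] := Matrix.det ((X : ℝ[X]) • m.map C + (1 : Matrix _ _ ℝ).map C) with hp
  have hev : ∀ s : ℝ, (ContinuousLinearMap.id ℝ E + s • A).det = p.eval s := by
    intro s
    rw [hp, ← Polynomial.coe_evalRingHom, RingHom.map_det, ContinuousLinearMap.det,
      ← LinearMap.det_toMatrix b]
    congr 1
    ext i j
    simp [m, LinearMap.toMatrix_apply, Matrix.one_apply, Finsupp.single_apply, eq_comm, add_comm]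
    split_ifs <;> simp [mul_comm]
  have hdeg : p.degree < (Finset.range (Module.finrank ℝ E + 1)).card := by
    rw [Finset.card_range]
    refine lt_of_le_of_lt Polynomial.degree_le_natDegree ?_
    have := Polynomial.natDegree_det_X_add_C_le m (1 : Matrix _ _ ℝ)
    rw [Fintype.card_fin] at this
    exact_mod_cast Nat.lt_succ_of_le this
  have h := Lagrange.eq_interpolate (s := Finset.range (Module.finrank ℝ E + 1)) (v := v)
    hv.injOn hdeg
  simp only [hev]
  conv_lhs => rw [h]
  rw [Lagrange.interpolate_apply, Polynomial.eval_finsetSum]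
  simp

lemma jj_det_pos {E : Type*} [NormedAddCommGroup E] [NormedSpace ℝ E] [FiniteDimensional ℝ E]
    (A : E →L[ℝ] E) (t c : ℝ) (ht : 0 ≤ t) (hc : ‖A‖ ≤ c) (htc : t * c < 1) :
    0 < (ContinuousLinearMap.id ℝ E + t • A).det := by
  have hne : ∀ s ∈ Icc 0 t, (ContinuousLinearMap.id ℝ E + s • A).det ≠ 0 := by
    intro s hs h0
    have := LinearMap.bot_lt_ker_of_det_eq_zero (f := ((ContinuousLinearMap.id ℝ E + s • A : E →L[ℝ] E) : E →ₗ[ℝ] E)) h0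
    obtain ⟨x, hx, hx0⟩ := Submodule.exists_mem_ne_zero_of_ne_bot this.ne'
    have hx' : x + s • A x = 0 := by simpa using hx
    have h1 : ‖x‖ = s * ‖A x‖ := by
      have := congrArg norm (eq_neg_of_add_eq_zero_left hx')
      rwa [norm_neg, norm_smul, Real.norm_of_nonneg hs.1] at this
    have h2 : ‖A x‖ ≤ c * ‖x‖ := (A.le_opNorm x).trans (by gcongr)
    have h3 : 0 < ‖x‖ := norm_pos_iff.2 hx0
    have hc0 : 0 ≤ c := (norm_nonneg _).trans hc
    have h4 : s * ‖A x‖ ≤ t * (c * ‖x‖) := by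
      have := hs.1; have := hs.2; gcongr
    nlinarith
  by_contra hneg
  push Not at hneg
  have hcont : ContinuousOn (fun s : ℝ => (ContinuousLinearMap.id ℝ E + s • A).det) (Icc 0 t) := by
    apply Continuous.continuousOn
    exact ContinuousLinearMap.continuous_det.comp (by fun_prop)
  have := intermediate_value_Icc' ht hcont
  have h0 : (0:ℝ) ∈ Icc ((ContinuousLinearMap.id ℝ E + t • A).det) ((ContinuousLinearMap.id ℝ E + (0:ℝ) • A).det) := by
    refine ⟨hneg, ?_⟩
    simp [ContinuousLinearMap.det]
  obtain ⟨s, hs, hs0⟩ := this h0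
  exact hne s hs hs0


/-- For small `t`, the volume of the image of the ball under `x ↦ x + t w x`. -/
lemma jj_small_t {E : Type*} [NormedAddCommGroup E] [InnerProductSpace ℝ E]
    [FiniteDimensional ℝ E] [Nontrivial E] [MeasurableSpace E] [BorelSpace E]
    (R : ℝ) (hR : 0 < R) (r : E → E) (hr : ContDiff ℝ 1 r) (hn : ∀ x, ‖r x‖ = R)
    (hb : ∀ x, ‖x‖ = R → r x = x) (c t : ℝ) (ht : 0 < t) (ht1 : t < 1)
    (hc : ∀ x ∈ closedBall (0:E) R, ‖fderiv ℝ r x - ContinuousLinearMap.id ℝ E‖ ≤ c)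
    (htc : t * c < 1) :
    ∫ x in ball (0:E) R, (ContinuousLinearMap.id ℝ E +
        t • (fderiv ℝ r x - ContinuousLinearMap.id ℝ E)).det = volume.real (ball (0:E) R) := by
  have hc0 : 0 ≤ c := (norm_nonneg _).trans (hc 0 (by simp [hR.le]))
  have hrd : Differentiable ℝ r := hr.differentiable (by norm_num)
  set g : E → E := fun x => x + t • (r x - x) with hg
  have hgd : ∀ x, HasFDerivAt g (ContinuousLinearMap.id ℝ E +
        t • (fderiv ℝ r x - ContinuousLinearMap.id ℝ E)) x := by
    intro x
    exact (hasFDerivAt_id x).add (((hrd x).hasFDerivAt.sub (hasFDerivAt_id x)).const_smul t)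
  have hgc : Continuous g := by
    have := hr.continuous
    fun_prop
  have hlip : ∀ x ∈ closedBall (0:E) R, ∀ y ∈ closedBall (0:E) R,
      ‖(r x - x) - (r y - y)‖ ≤ c * ‖x - y‖ := by
    intro x hx y hy
    refine Convex.norm_image_sub_le_of_norm_hasFDerivWithin_le (f := fun x => r x - x)
      (f' := fun x => fderiv ℝ r x - ContinuousLinearMap.id ℝ E) (s := closedBall (0:E) R)
      ?_ hc (convex_closedBall _ _) hy hx
    intro z hz
    exact ((hrd z).hasFDerivAt.sub (hasFDerivAt_id z)).hasFDerivWithinAt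
  have happ : ApproximatesLinearOn g ((ContinuousLinearEquiv.refl ℝ E : E ≃L[ℝ] E) : E →L[ℝ] E)
      (ball (0:E) R) ⟨t * c, by positivity⟩ := by
    intro x hx y hy
    have := hlip x (ball_subset_closedBall hx) y (ball_subset_closedBall hy)
    have e : g x - g y - ((ContinuousLinearEquiv.refl ℝ E : E ≃L[ℝ] E) : E →L[ℝ] E) (x - y)
        = t • ((r x - x) - (r y - y)) := by
      simp only [hg, ContinuousLinearEquiv.coe_refl, ContinuousLinearMap.id_apply]
      module
    rw [e, norm_smul, Real.norm_of_nonneg ht.le]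
    show _ ≤ t * c * ‖x - y‖
    rw [mul_assoc]
    gcongr
  have hcN : (⟨t * c, by positivity⟩ : NNReal) <
      ‖(((ContinuousLinearEquiv.refl ℝ E).symm : E ≃L[ℝ] E) : E →L[ℝ] E)‖₊⁻¹ := by
    have : ‖(((ContinuousLinearEquiv.refl ℝ E).symm : E ≃L[ℝ] E) : E →L[ℝ] E)‖₊ = 1 := by
      rw [ContinuousLinearEquiv.refl_symm, ContinuousLinearEquiv.coe_refl]
      ext
      simp
    rw [this, inv_one]
    exact_mod_cast htc
  have hinj : InjOn g (ball (0:E) R) := happ.injOn (Or.inr hcN)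
  have hopen : IsOpen (g '' ball (0:E) R) := by
    refine happ.open_image (ContinuousLinearEquiv.toNonlinearRightInverse _) isOpen_ball
      (Or.inr hcN)
  have hgs : ∀ x, ‖x‖ = R → g x = x := by
    intro x hx; simp [hg, hb x hx]
  have hgin : g '' ball (0:E) R ⊆ ball (0:E) R := by
    rintro _ ⟨x, hx, rfl⟩
    rw [mem_ball_zero_iff] at hx ⊢
    have e : g x = (1 - t) • x + t • r x := by simp only [hg]; module
    rw [e]
    calc ‖(1 - t) • x + t • r x‖ ≤ ‖(1 - t) • x‖ + ‖t • r x‖ := norm_add_le _ _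
      _ = (1 - t) * ‖x‖ + t * R := by
        rw [norm_smul, norm_smul, hn, Real.norm_of_nonneg ht.le,
          Real.norm_of_nonneg (by linarith)]
      _ < R := by nlinarith
  have himg : g '' ball (0:E) R = ball (0:E) R := by
    refine Subset.antisymm hgin ?_
    refine (convex_ball (0:E) R).isPreconnected.subset_of_closure_inter_subset hopen ?_ ?_
    · have h0 : (0:E) ∈ ball (0:E) R := by simp [hR]
      exact ⟨g 0, hgin ⟨0, h0, rfl⟩, ⟨0, h0, rfl⟩⟩
    · rintro y ⟨hy, hyb⟩
      have hcl : closure (g '' ball (0:E) R) ⊆ g '' closedBall (0:E) R :=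
        closure_minimal (image_mono ball_subset_closedBall)
          ((isCompact_closedBall _ _).image hgc).isClosed
      obtain ⟨x, hx, rfl⟩ := hcl hy
      rcases (mem_closedBall_zero_iff.1 hx).lt_or_eq with h | h
      · exact ⟨x, mem_ball_zero_iff.2 h, rfl⟩
      · rw [hgs x h, mem_ball_zero_iff] at hyb
        linarith
  have key := integral_image_eq_integral_abs_det_fderiv_smul (volume : Measure E)
    (measurableSet_ball (x := (0:E)) (ε := R)) (fun x _ => (hgd x).hasFDerivWithinAt) hinj
    (fun _ => (1:ℝ))
  rw [himg] at key
  have h2 : ∫ x in ball (0:E) R, (1:ℝ) = volume.real (ball (0:E) R) := by simp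
  rw [← h2, key]
  refine setIntegral_congr_fun measurableSet_ball fun x hx => ?_
  have := jj_det_pos (fderiv ℝ r x - ContinuousLinearMap.id ℝ E) t c ht.le
    (hc x (ball_subset_closedBall hx)) htc
  simp only [smul_eq_mul, mul_one]
  rw [abs_of_pos this]

lemma jj_no_retraction {E : Type*} [NormedAddCommGroup E] [InnerProductSpace ℝ E]
    [FiniteDimensional ℝ E] (R : ℝ) (hR : 0 < R) (r : E → E) (hr : ContDiff ℝ 1 r)
    (hn : ∀ x, ‖r x‖ = R) (hb : ∀ x, ‖x‖ = R → r x = x) : False := by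
  have hnt : Nontrivial E := ⟨r 0, 0, fun h => by have := hn 0; rw [h, norm_zero] at this; linarith⟩
  let _ : MeasurableSpace E := borel E
  have : BorelSpace E := ⟨rfl⟩
  have hrd : Differentiable ℝ r := hr.differentiable (by norm_num)
  have hcd : Continuous (fderiv ℝ r) := hr.continuous_fderiv (by norm_num)
  obtain ⟨c, hc⟩ := (isCompact_closedBall (0:E) R).exists_bound_of_continuousOn
    (f := fun x => fderiv ℝ r x - ContinuousLinearMap.id ℝ E) (by fun_prop)
  have hc0 : 0 ≤ c := (norm_nonneg _).trans (hc 0 (by simp [hR.le]))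
  set v : ℕ → ℝ := fun i => 1 / ((c + 2) * (i + 1)) with hv
  have hvpos : ∀ i, 0 < v i := fun i => by simp only [hv]; positivity
  have hvle : ∀ i, v i ≤ 1 / (c + 2) := fun i => by
    simp only [hv]
    apply one_div_le_one_div_of_le (by positivity)
    have : (0:ℝ) ≤ i := Nat.cast_nonneg i
    nlinarith
  have hvinj : Function.Injective v := by
    intro i j hij
    simp only [hv] at hij
    have h1 : (c + 2) * ((i:ℝ) + 1) = (c + 2) * ((j:ℝ) + 1) := by
      have := congrArg (fun x => x⁻¹) hij
      simpa only [one_div, inv_inv] using this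
    have h2 := mul_left_cancel₀ (by positivity) h1
    exact_mod_cast add_right_cancel h2
  have hI : ∀ i, ∫ x in ball (0:E) R, (ContinuousLinearMap.id ℝ E +
        v i • (fderiv ℝ r x - ContinuousLinearMap.id ℝ E)).det = volume.real (ball (0:E) R) := by
    intro i
    have h1 : 1 / (c + 2) < 1 := by rw [div_lt_one (by positivity)]; linarith
    refine jj_small_t R hR r hr hn hb c (v i) (hvpos i) ((hvle i).trans_lt h1) hc ?_
    calc v i * c ≤ 1 / (c + 2) * c := by gcongr; exact hvle i
      _ < 1 := by rw [div_mul_eq_mul_div, div_lt_one (by positivity)]; linarith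
  have hIntegr : ∀ t : ℝ, IntegrableOn (fun x => (ContinuousLinearMap.id ℝ E +
        t • (fderiv ℝ r x - ContinuousLinearMap.id ℝ E)).det) (ball (0:E) R) := by
    intro t
    have hcont : Continuous (fun x => (ContinuousLinearMap.id ℝ E +
        t • (fderiv ℝ r x - ContinuousLinearMap.id ℝ E)).det) :=
      ContinuousLinearMap.continuous_det.comp (by fun_prop)
    exact (hcont.continuousOn.integrableOn_compact (isCompact_closedBall (0:E) R)).mono_set
      ball_subset_closedBall
  -- total volume at t = 1
  have h1 : ∫ x in ball (0:E) R, (ContinuousLinearMap.id ℝ E +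
        (1:ℝ) • (fderiv ℝ r x - ContinuousLinearMap.id ℝ E)).det = volume.real (ball (0:E) R) := by
    have hsum := jj_det_interp v hvinj (0 : E →L[ℝ] E) 1
    simp only [smul_zero, add_zero] at hsum
    have hid : (ContinuousLinearMap.id ℝ E).det = 1 := by simp [ContinuousLinearMap.det]
    simp only [hid, one_mul] at hsum
    simp_rw [jj_det_interp v hvinj _ (1:ℝ)]
    rw [integral_finsetSum]
    · simp_rw [integral_mul_const, hI]
      rw [← Finset.mul_sum, ← hsum, mul_one]
    · intro i _
      exact (hIntegr (v i)).mul_const _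
  have h0 : ∀ x, (ContinuousLinearMap.id ℝ E +
        (1:ℝ) • (fderiv ℝ r x - ContinuousLinearMap.id ℝ E)).det = 0 := by
    intro x
    have e : ContinuousLinearMap.id ℝ E +
        (1:ℝ) • (fderiv ℝ r x - ContinuousLinearMap.id ℝ E) = fderiv ℝ r x := by
      rw [one_smul]; abel
    rw [e]
    by_contra hne
    have hsurj : Function.Surjective (fderiv ℝ r x) := by
      have hu : IsUnit (LinearMap.det ((fderiv ℝ r x : E →L[ℝ] E) : E →ₗ[ℝ] E)) :=
        isUnit_iff_ne_zero.2 hne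
      exact ((Module.End.isUnit_iff _).1 ((LinearMap.isUnit_iff_isUnit_det _).2 hu)).2
    obtain ⟨y, hy⟩ := hsurj (r x)
    have hd : HasFDerivAt (fun x => ‖r x‖ ^ 2) _ x := (hrd x).hasFDerivAt.norm_sq
    have hconst : (fun x => ‖r x‖ ^ 2) = fun _ => R ^ 2 := by funext z; rw [hn]
    rw [hconst] at hd
    have := hd.unique (hasFDerivAt_const (R ^ 2) x)
    have h3 := congrArg (fun T : E →L[ℝ] ℝ => T y) this
    simp [hy, hn] at h3
    linarith
  simp only [h0, integral_zero] at h1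
  have : 0 < volume.real (ball (0:E) R) :=
    ENNReal.toReal_pos (measure_ball_pos _ _ hR).ne' measure_ball_lt_top.ne
  linarith


/-- Approximate fixed points of bounded continuous maps of a Euclidean space. -/
lemma jj_brouwer_approx {E : Type*} [NormedAddCommGroup E] [InnerProductSpace ℝ E]
    [FiniteDimensional ℝ E] (f : E → E) (hf : Continuous f) (r : ℝ) (hr : 0 ≤ r)
    (hfr : ∀ x, ‖f x‖ ≤ r) (ε : ℝ) (hε : 0 < ε) (hε1 : ε < 1) :
    ∃ x ∈ closedBall (0:E) (r + 2), ‖x - f x‖ ≤ ε := by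
  by_contra hcon
  push Not at hcon
  obtain ⟨p, hp, hpf, -⟩ := hf.exists_contDiff_approx 1 (ε := fun _ => ε) continuous_const
    (fun _ => hε)
  have hpf' : ∀ x, ‖p x - f x‖ < ε := fun x => by rw [← dist_eq_norm]; exact hpf x
  let χ : ContDiffBump (0:E) := ⟨r + 1, r + 2, by linarith, by linarith⟩
  set g : E → E := fun x => x - χ x • p x with hg
  have hgd : ContDiff ℝ 1 g := contDiff_id.sub (χ.contDiff.smul hp)
  have hpn : ∀ x, ‖p x‖ < r + ε := fun x => by
    calc ‖p x‖ = ‖(p x - f x) + f x‖ := by rw [sub_add_cancel]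
      _ ≤ ‖p x - f x‖ + ‖f x‖ := norm_add_le _ _
      _ < r + ε := by linarith [hpf' x, hfr x]
  have hg0 : ∀ x, g x ≠ 0 := by
    intro x hx
    have hx' : x = χ x • p x := sub_eq_zero.1 hx
    have hxn : ‖x‖ ≤ r + ε := by
      calc ‖x‖ = ‖χ x • p x‖ := by rw [← hx']
        _ = χ x * ‖p x‖ := by rw [norm_smul, Real.norm_of_nonneg χ.nonneg]
        _ ≤ 1 * ‖p x‖ := by gcongr; exact χ.le_one
        _ ≤ r + ε := by linarith [hpn x]
    have h1 : χ x = 1 := χ.one_of_mem_closedBall (by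
      rw [mem_closedBall_zero_iff]; show ‖x‖ ≤ r + 1; linarith)
    rw [h1, one_smul] at hx'
    have := hcon x (by rw [mem_closedBall_zero_iff]; linarith)
    have h2 := hpf' x
    rw [← hx'] at h2
    linarith
  refine jj_no_retraction (E := E) (r + 2) (by linarith) (fun x => ((r + 2) / ‖g x‖) • g x) ?_ ?_ ?_
  · exact (contDiff_const.div (hgd.norm ℝ hg0) (fun x => norm_ne_zero_iff.2 (hg0 x))).smul hgd
  · intro x
    have := norm_pos_iff.2 (hg0 x)
    rw [norm_smul, norm_div, norm_norm, Real.norm_of_nonneg (by linarith : 0 ≤ r + 2)]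
    field_simp
  · intro x hx
    have h0 : χ x = 0 := χ.zero_of_le_dist (by
      rw [dist_zero_right]; show r + 2 ≤ ‖x‖; linarith)
    have hgx : g x = x := by simp [hg, h0]
    show ((r + 2) / ‖g x‖) • g x = x
    rw [hgx, hx, div_self (by linarith), one_smul]

lemma jj_brouwer_inner {E : Type*} [NormedAddCommGroup E] [InnerProductSpace ℝ E]
    [FiniteDimensional ℝ E] (f : E → E) (hf : Continuous f) (r : ℝ) (hr : 0 ≤ r)
    (hfr : ∀ x, ‖f x‖ ≤ r) : ∃ x, f x = x := by
  obtain ⟨x, hx, hmin⟩ := (isCompact_closedBall (0:E) (r + 2)).exists_isMinOn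
    ⟨0, by simp; linarith⟩ (f := fun x => ‖x - f x‖) (by fun_prop)
  refine ⟨x, ?_⟩
  by_contra hne
  have hpos : 0 < ‖x - f x‖ := norm_pos_iff.2 (sub_ne_zero.2 (Ne.symm hne))
  obtain ⟨y, hy, hyε⟩ := jj_brouwer_approx f hf r hr hfr (min (1/2) (‖x - f x‖ / 2))
    (by positivity) (lt_of_le_of_lt (min_le_left _ _) (by norm_num))
  have h1 : ‖x - f x‖ ≤ ‖y - f y‖ := hmin hy
  have h2 := min_le_right (1/2) (‖x - f x‖ / 2)
  linarith

/-- Brouwer: a bounded continuous self-map of a finite-dimensional space has a fixed point. -/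
lemma jj_brouwer {V : Type*} [NormedAddCommGroup V] [NormedSpace ℝ V]
    [FiniteDimensional ℝ V] (f : V → V) (hf : Continuous f) (r : ℝ)
    (hfr : ∀ x, ‖f x‖ ≤ r) : ∃ x, f x = x := by
  have hr : 0 ≤ r := (norm_nonneg _).trans (hfr 0)
  let e : V ≃L[ℝ] EuclideanSpace ℝ (Fin (Module.finrank ℝ V)) := toEuclidean
  obtain ⟨y, hy⟩ := jj_brouwer_inner (fun y => e (f (e.symm y))) (by fun_prop)
    (‖(e : V →L[ℝ] EuclideanSpace ℝ (Fin (Module.finrank ℝ V)))‖ * r) (by positivity)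
    (fun y => ((e : V →L[ℝ] EuclideanSpace ℝ (Fin (Module.finrank ℝ V))).le_opNorm _).trans
      (by gcongr; exact hfr _))
  exact ⟨e.symm y, by conv_rhs => rw [← hy, ContinuousLinearEquiv.symm_apply_apply]⟩

/-- Fixed points on the infinite product of unit discs. -/
lemma jj_fixed (F : (ℕ → ℂ) → (ℕ → ℂ)) (hF : Continuous F) (hb : ∀ x k, ‖F x k‖ ≤ 1) :
    ∃ x, F x = x := by
  have hn : ∀ n : ℕ, ∃ x : ℕ → ℂ, (∀ k, ‖x k‖ ≤ 1) ∧ ∀ k < n, F x k = x k := by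
    intro n
    let ext : (Fin n → ℂ) → (ℕ → ℂ) := fun w k => if h : k < n then w ⟨k, h⟩ else 0
    have hext : Continuous ext := by
      refine continuous_pi fun k => ?_
      by_cases h : k < n
      · simp only [ext, h, dite_true]; fun_prop
      · simp only [ext, h, dite_false]; fun_prop
    obtain ⟨w, hw⟩ := jj_brouwer (fun w : Fin n → ℂ => fun i => F (ext w) i)
      (continuous_pi fun i => (continuous_apply _).comp (hF.comp hext)) 1
      (fun w => (pi_norm_le_iff_of_nonneg zero_le_one).2 fun i => hb _ _)
    refine ⟨ext w, fun k => ?_, fun k hk => ?_⟩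
    · by_cases h : k < n
      · have := congrFun hw ⟨k, h⟩
        simp only [ext, h, dite_true]
        rw [← this]
        exact hb _ _
      · simp [ext, h]
    · have := congrFun hw ⟨k, hk⟩
      simp only at this
      rw [this]
      simp [ext, hk]
  choose x hx1 hx2 using hn
  have hK : IsCompact (Set.pi univ fun _ : ℕ => closedBall (0:ℂ) 1) :=
    isCompact_univ_pi fun _ => isCompact_closedBall _ _
  obtain ⟨a, -, φ, hφ, hlim⟩ := hK.tendsto_subseq (x := x) (fun n k _ => by
    rw [mem_closedBall_zero_iff]; exact hx1 n k)
  refine ⟨a, funext fun k => ?_⟩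
  have h1 : Filter.Tendsto (fun n => F (x (φ n)) k) Filter.atTop (nhds (F a k)) :=
    ((continuous_apply k).comp hF).continuousAt.tendsto.comp hlim
  have h2 : Filter.Tendsto (fun n => x (φ n) k) Filter.atTop (nhds (a k)) :=
    (continuous_apply k).continuousAt.tendsto.comp hlim
  refine tendsto_nhds_unique h1 (h2.congr' ?_)
  filter_upwards [Filter.eventually_gt_atTop k] with n hnk
  exact (hx2 (φ n) k (lt_of_lt_of_le hnk (hφ.id_le n))).symm

end Brouwer

section Series
open MeasureTheory Set

/-- Real part of a one-sided trigonometric series. -/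
noncomputable def jjS (a : ℕ → ℂ) (θ : ℝ) : ℝ :=
  (∑' k : ℕ, a k * Complex.exp (k * θ * Complex.I)).re

lemma jj_norm_exp (k : ℕ) (θ : ℝ) : ‖Complex.exp (k * θ * Complex.I)‖ = 1 := by
  have := Complex.norm_exp_ofReal_mul_I (k * θ)
  push_cast at this
  exact this

lemma jj_summable_lower {a : ℕ → ℂ} {m n : ℕ} (hmn : m ≤ n)
    (h : Summable fun k : ℕ => (k:ℝ) ^ n * ‖a k‖) : Summable fun k : ℕ => (k:ℝ) ^ m * ‖a k‖ := by
  refine Summable.of_norm_bounded_eventually_nat h ?_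
  filter_upwards [Filter.eventually_ge_atTop 1] with k hk
  have : (1:ℝ) ≤ k := by exact_mod_cast hk
  rw [Real.norm_of_nonneg (by positivity)]
  gcongr

lemma jj_summable_terms {a : ℕ → ℂ} (h : Summable fun k : ℕ => ‖a k‖) (θ : ℝ) :
    Summable fun k : ℕ => a k * Complex.exp (k * θ * Complex.I) := by
  refine Summable.of_norm ?_
  simpa only [norm_mul, jj_norm_exp, mul_one] using h

lemma jjS_hasDerivAt {a : ℕ → ℂ} (h : Summable fun k : ℕ => (k:ℝ) ^ 1 * ‖a k‖) (θ : ℝ) :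
    HasDerivAt (jjS a) (jjS (fun k => k * Complex.I * a k) θ) θ := by
  have h0 : Summable fun k : ℕ => ‖a k‖ := by simpa using jj_summable_lower (Nat.zero_le 1) h
  have := hasDerivAt_tsum (𝕜 := ℝ) (F := ℂ) (u := fun k : ℕ => (k:ℝ) ^ 1 * ‖a k‖)
    (g := fun (k : ℕ) (θ : ℝ) => a k * Complex.exp (k * θ * Complex.I))
    (g' := fun (k : ℕ) (θ : ℝ) => k * Complex.I * a k * Complex.exp (k * θ * Complex.I))
    h ?_ ?_ (jj_summable_terms h0 0) θ
  · exact (Complex.reCLM.hasFDerivAt.comp_hasDerivAt θ this)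
  · intro k y
    have h1 : HasDerivAt (fun θ : ℝ => (k * θ * Complex.I : ℂ)) (k * Complex.I) y := by
      have := (Complex.ofRealCLM.hasDerivAt (x := y)).const_mul (k:ℂ) |>.mul_const Complex.I
      simpa using this
    have h2 := (h1.cexp).const_mul (a k)
    refine h2.congr_deriv ?_
    ring
  · intro k y
    simp [jj_norm_exp]

lemma jj_summable_deriv {a : ℕ → ℂ} {n : ℕ} (h : Summable fun k : ℕ => (k:ℝ) ^ (n+1) * ‖a k‖) :
    Summable fun k : ℕ => (k:ℝ) ^ n * ‖(k * Complex.I * a k : ℂ)‖ := by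
  refine h.congr fun k => ?_
  simp; ring

lemma jjS_continuous {a : ℕ → ℂ} (h : Summable fun k : ℕ => ‖a k‖) : Continuous (jjS a) := by
  refine Complex.continuous_re.comp ?_
  refine continuous_tsum (u := fun k => ‖a k‖) (fun k => by fun_prop) h fun k θ => ?_
  rw [norm_mul, jj_norm_exp, mul_one]

lemma jjS_contDiff (n : ℕ) : ∀ {a : ℕ → ℂ}, (Summable fun k : ℕ => (k:ℝ) ^ n * ‖a k‖) →
    ContDiff ℝ n (jjS a) := by
  induction n with
  | zero =>
    intro a h
    simp only [pow_zero, one_mul] at h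
    exact contDiff_zero.2 (jjS_continuous h)
  | succ n ih =>
    intro a h
    have h1 := fun θ => jjS_hasDerivAt (jj_summable_lower (Nat.le_add_left 1 n) h) θ
    have hd : deriv (jjS a) = jjS (fun k => k * Complex.I * a k) := funext fun θ => (h1 θ).deriv
    push_cast
    rw [contDiff_succ_iff_deriv]
    refine ⟨fun θ => (h1 θ).differentiableAt, by simp, ?_⟩
    rw [hd]
    exact ih (jj_summable_deriv h)

lemma jjS_add {a b : ℕ → ℂ} (ha : Summable fun k : ℕ => ‖a k‖) (hb : Summable fun k : ℕ => ‖b k‖)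
    (θ : ℝ) : jjS (fun k => a k + b k) θ = jjS a θ + jjS b θ := by
  simp only [jjS, add_mul]
  rw [(jj_summable_terms ha θ).tsum_add (jj_summable_terms hb θ), Complex.add_re]

lemma jjS_smul (a : ℕ → ℂ) (c : ℝ) (θ : ℝ) : jjS (fun k => c * a k) θ = c * jjS a θ := by
  simp only [jjS, mul_assoc]
  rw [tsum_mul_left, Complex.re_ofReal_mul]

lemma jjS_sum {a : ℕ → ℕ → ℂ} (n : ℕ) (ha : ∀ j, Summable fun k : ℕ => ‖a j k‖) (θ : ℝ) :
    jjS (fun k => ∑ j ∈ Finset.range n, a j k) θ = ∑ j ∈ Finset.range n, jjS (a j) θ := by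
  simp only [jjS, Finset.sum_mul]
  rw [Summable.tsum_finsetSum (fun j _ => jj_summable_terms (ha j) θ), Complex.re_sum]

lemma jjS_shift (a : ℕ → ℂ) (θ α : ℝ) :
    jjS a (θ - α) = jjS (fun k => Complex.exp (-(k * α * Complex.I)) * a k) θ := by
  simp only [jjS]
  congr 2
  funext k
  rw [mul_comm (Complex.exp _) (a k), mul_assoc (a k), ← Complex.exp_add]
  congr 2
  push_cast; ring

lemma jjS_periodic (a : ℕ → ℂ) (θ : ℝ) : jjS a (θ + 2 * π) = jjS a θ := by
  simp only [jjS]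
  congr 2
  funext k
  congr 1
  rw [Complex.exp_eq_exp_iff_exists_int]
  exact ⟨k, by push_cast; ring⟩

/-- Only the constant mode. -/
lemma jjS_single {a : ℕ → ℂ} (h : ∀ k, k ≠ 0 → a k = 0) (θ : ℝ) : jjS a θ = (a 0).re := by
  simp only [jjS]
  rw [tsum_eq_single 0 (fun k hk => by simp [h k hk])]
  simp

/-- Fourier coefficients of a real function on `[0, 2π]`. -/
noncomputable def jjc (f : ℝ → ℝ) (k : ℤ) : ℂ :=
  (1 / (2 * π) : ℝ) * ∫ θ in (0:ℝ)..(2 * π), Complex.exp (-(k * θ * Complex.I)) * f θ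

lemma jjc_eq (f : ℝ → ℝ) (k : ℤ) :
    jjc f k = fourierCoeffOn Real.two_pi_pos (fun θ => (f θ : ℂ)) k := by
  rw [fourierCoeffOn_eq_integral, jjc, sub_zero, Complex.real_smul]
  congr 1
  refine intervalIntegral.integral_congr fun θ _ => ?_
  simp only [smul_eq_mul]
  rw [fourier_coe_apply]
  congr 2
  have : (π:ℂ) ≠ 0 := by exact_mod_cast Real.pi_ne_zero
  push_cast
  field_simp

lemma jjc_norm_le (f : ℝ → ℝ) (hf : ∀ θ, |f θ| ≤ 1) (k : ℤ) : ‖jjc f k‖ ≤ 1 := by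
  have hpi := Real.two_pi_pos
  have h1 : ‖∫ θ in (0:ℝ)..(2 * π), Complex.exp (-(k * θ * Complex.I)) * f θ‖
      ≤ 1 * |2 * π - 0| := by
    refine intervalIntegral.norm_integral_le_of_norm_le_const fun θ _ => ?_
    have := Complex.norm_exp_ofReal_mul_I (-(k * θ))
    push_cast at this
    rw [neg_mul] at this
    rw [norm_mul, this, one_mul, Complex.norm_real]
    exact hf θ
  rw [jjc, norm_mul, Complex.norm_real, Real.norm_of_nonneg (by positivity)]
  rw [sub_zero, one_mul, abs_of_pos hpi] at h1
  calc 1 / (2 * π) * _ ≤ 1 / (2 * π) * (2 * π) := by gcongr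
    _ = 1 := by field_simp

lemma jjc_neg (f : ℝ → ℝ) (k : ℤ) : jjc f (-k) = (starRingEnd ℂ) (jjc f k) := by
  rw [jjc, jjc, map_mul, Complex.conj_ofReal, intervalIntegral.integral_of_le Real.two_pi_pos.le,
    intervalIntegral.integral_of_le Real.two_pi_pos.le, ← integral_conj]
  congr 2
  funext θ
  simp [← Complex.exp_conj]

lemma jjc_sq_summable (f : ℝ → ℝ) (hf : Continuous f) : Summable fun k : ℤ => ‖jjc f k‖ ^ 2 := by
  have hc : Continuous fun θ => (f θ : ℂ) := by fun_prop
  have hm : MemLp (fun θ => (f θ : ℂ)) 2 (volume.restrict (Ioc 0 (2 * π))) := by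
    obtain ⟨C, hC⟩ := (isCompact_Icc (a := 0) (b := 2 * π)).exists_bound_of_continuousOn
      hc.continuousOn
    refine MemLp.of_bound hc.aestronglyMeasurable C ?_
    rw [ae_restrict_iff' measurableSet_Ioc]
    exact Filter.Eventually.of_forall fun θ hθ => hC θ (Ioc_subset_Icc_self hθ)
  have := (hasSum_sq_fourierCoeffOn Real.two_pi_pos hm).summable
  simpa only [jjc_eq] using this

lemma jjc_deriv (f f' : ℝ → ℝ) (hf : ∀ θ, HasDerivAt f (f' θ) θ) (hf' : Continuous f')
    (hp : f (2 * π) = f 0) (k : ℤ) : jjc f' k = k * Complex.I * jjc f k := by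
  have hpi : (π:ℂ) ≠ 0 := by exact_mod_cast Real.pi_ne_zero
  rcases eq_or_ne k 0 with rfl | hk
  · simp only [jjc]
    simp only [Int.cast_zero, zero_mul, neg_zero, Complex.exp_zero, one_mul]
    rw [intervalIntegral.integral_ofReal,
      intervalIntegral.integral_eq_sub_of_hasDerivAt (fun θ _ => hf θ)
        (hf'.intervalIntegrable _ _), hp]
    simp
  · have hk' : (k:ℂ) ≠ 0 := by exact_mod_cast hk
    rw [jjc_eq, jjc_eq, fourierCoeffOn_of_hasDerivAt (f' := fun θ => (f' θ : ℂ)) Real.two_pi_pos hk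
      (fun x _ => (hf x).ofReal_comp) (Continuous.intervalIntegrable (by fun_prop) _ _), hp]
    push_cast
    field_simp
    simp [mul_assoc]

lemma jjc_iteratedDeriv (n : ℕ) (f : ℝ → ℝ) (hf : ContDiff ℝ n f)
    (hp : ∀ θ, f (θ + 2 * π) = f θ) (k : ℤ) :
    jjc (iteratedDeriv n f) k = (k * Complex.I) ^ n * jjc f k := by
  induction n with
  | zero => simp
  | succ n ih =>
    have h1 : ContDiff ℝ n f := hf.of_le (by exact_mod_cast Nat.le_succ n)
    have hd : Differentiable ℝ (iteratedDeriv n f) :=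
      hf.differentiable_iteratedDeriv n (by exact_mod_cast Nat.lt_succ_self n)
    have hc : Continuous (iteratedDeriv (n+1) f) := hf.continuous_iteratedDeriv (n+1) le_rfl
    have hper : iteratedDeriv n f (2 * π) = iteratedDeriv n f 0 := by
      have := iteratedDeriv_comp_add_const n f (2 * π)
      have h2 : (fun z => f (z + 2 * π)) = f := funext hp
      rw [h2] at this
      have h3 := congrFun this 0
      simpa using h3.symm
    rw [jjc_deriv (iteratedDeriv n f) (iteratedDeriv (n+1) f) ?_ hc hper, ih h1]
    · ring
    · intro θ
      rw [iteratedDeriv_succ]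
      exact (hd θ).hasDerivAt

lemma jjc_sum (f : ℝ → ℝ) (hf : Continuous f) (hp : ∀ θ, f (θ + 2 * π) = f θ)
    (hs : Summable fun k : ℕ => ‖jjc f k‖) (θ : ℝ) :
    jjS (fun k => 2 * jjc f k - if k = 0 then jjc f 0 else 0) θ = f θ := by
  have : Fact (0 < 2 * π) := ⟨Real.two_pi_pos⟩
  have hper : Function.Periodic (fun θ => (f θ : ℂ)) (2 * π) := fun θ => by simp [hp]
  have hcl : Continuous hper.lift :=
    continuous_coinduced_dom.2 (by
      show Continuous fun θ => (f θ : ℂ)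
      fun_prop)
  let G : C(AddCircle (2 * π), ℂ) := ⟨hper.lift, hcl⟩
  have hG : ∀ k, fourierCoeff G k = jjc f k := by
    intro k
    rw [fourierCoeff_eq_intervalIntegral _ _ 0, jjc, Complex.real_smul, zero_add]
    congr 1
    refine intervalIntegral.integral_congr fun θ _ => ?_
    have e2 : G (θ : AddCircle (2 * π)) = f θ := rfl
    simp only [smul_eq_mul]
    rw [fourier_coe_apply, e2]
    congr 2
    have : (π:ℂ) ≠ 0 := by exact_mod_cast Real.pi_ne_zero
    push_cast
    field_simp
  have hsZ : Summable (fourierCoeff G) := by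
    refine Summable.of_norm ?_
    refine Summable.of_nat_of_neg ?_ ?_
    · simpa only [hG] using hs
    · simp only [hG, jjc_neg]
      simpa using hs
  have key := has_pointwise_sum_fourier_series_of_summable hsZ (θ : AddCircle (2 * π))
  have e1 : ∀ k : ℤ, fourierCoeff G k • fourier k (θ : AddCircle (2 * π))
      = jjc f k * Complex.exp (k * θ * Complex.I) := by
    intro k
    rw [hG, fourier_coe_apply, smul_eq_mul]
    congr 2
    have : (π:ℂ) ≠ 0 := by exact_mod_cast Real.pi_ne_zero
    push_cast
    field_simp
  have e2 : G (θ : AddCircle (2 * π)) = f θ := rfl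
  simp only [e1] at key
  rw [e2] at key
  have key2 := (Complex.hasSum_re key.nat_add_neg)
  have hx : ∀ k : ℕ, (jjc f k * Complex.exp ((k:ℤ) * θ * Complex.I) +
      jjc f (-(k:ℤ)) * Complex.exp ((-(k:ℤ) : ℤ) * θ * Complex.I)).re =
      (2 * jjc f k * Complex.exp (k * θ * Complex.I)).re := by
    intro k
    have : jjc f (-(k:ℤ)) * Complex.exp ((-(k:ℤ) : ℤ) * θ * Complex.I) =
        (starRingEnd ℂ) (jjc f k * Complex.exp (k * θ * Complex.I)) := by
      rw [jjc_neg, map_mul, ← Complex.exp_conj]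
      simp
    rw [this, Complex.add_re, Complex.conj_re, mul_assoc]
    simp
    ring_nf
  simp only [hx] at key2
  have hsum2 : Summable fun k : ℕ => ‖2 * jjc f k‖ := by
    simpa using hs.mul_left 2
  have h3 : HasSum (fun k : ℕ => (if k = 0 then jjc f 0 else 0) *
      Complex.exp (k * θ * Complex.I)) (jjc f 0) := by
    convert hasSum_single (f := fun k : ℕ => (if k = 0 then jjc f 0 else 0) *
      Complex.exp (k * θ * Complex.I)) 0 ?_ using 1
    · simp
    · intro k hk; simp [hk]
  have h4 := Complex.hasSum_re (((jj_summable_terms hsum2 θ).hasSum).sub h3)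
  have h5 := Complex.hasSum_re (jj_summable_terms hsum2 θ).hasSum
  have h6 := h5.unique key2
  simp only [jjS, sub_mul]
  rw [(((jj_summable_terms hsum2 θ).hasSum).sub h3).tsum_eq, Complex.sub_re, h6]
  simp

end Series

section Fixed
open MeasureTheory Set

/-- Radial clamp to the unit disc. -/
noncomputable def jjcl (w : ℂ) : ℂ := ((max 1 ‖w‖)⁻¹ : ℝ) * w

lemma jjcl_continuous : Continuous jjcl := by
  unfold jjcl
  have : Continuous fun w : ℂ => (max 1 ‖w‖)⁻¹ :=
    Continuous.inv₀ (by fun_prop) fun w => (lt_of_lt_of_le one_pos (le_max_left _ _)).ne'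
  exact (Complex.continuous_ofReal.comp this).mul continuous_id

lemma jjcl_norm (w : ℂ) : ‖jjcl w‖ ≤ 1 := by
  have h : 0 < max 1 ‖w‖ := lt_of_lt_of_le one_pos (le_max_left _ _)
  rw [jjcl, norm_mul, Complex.norm_real, Real.norm_of_nonneg (by positivity), inv_mul_le_iff₀ h,
    mul_one]
  exact le_max_right _ _

lemma jjcl_of_le {w : ℂ} (h : ‖w‖ ≤ 1) : jjcl w = w := by
  rw [jjcl, max_eq_left h]; simp

lemma jj_summable_div {b : ℕ → ℝ} (hb : ∀ k, 0 ≤ b k) (h : Summable fun k => b k ^ 2) :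
    Summable fun k : ℕ => b k / k := by
  have h2 : Summable fun k : ℕ => 1 / (k:ℝ) ^ 2 := Real.summable_one_div_nat_pow.2 (by norm_num)
  refine Summable.of_nonneg_of_le (fun k => div_nonneg (hb k) (Nat.cast_nonneg k)) (fun k => ?_)
    (h.add h2)
  rw [div_eq_mul_one_div, ← one_div_pow]
  nlinarith [sq_nonneg (b k - 1 / (k:ℝ)), sq_nonneg (b k), sq_nonneg (1 / (k:ℝ))]

lemma jj_exists (I κ : ℝ) (hI : 1 < I) (hκ : 0 < κ) (H : ℕ → ℝ → ℂ) (C : ℝ)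
    (hH : ∀ k, ContinuousOn (H k) (Ioi 0))
    (hHb : ∀ Ω, (I - 1) / κ ≤ Ω → ∀ k : ℕ, ‖H k Ω‖ ≤ C / (k:ℝ) ^ 2) :
    ∃ (Ω : ℝ) (c : ℕ → ℂ), 0 < Ω ∧ (I - 1) / κ ≤ Ω ∧ (∀ k, ‖c k‖ ≤ 1) ∧ κ * Ω + (c 0).re = I ∧
      ∀ k : ℕ, jjc (fun θ => Real.sin (θ + jjS (fun k =>
        -((2 * c k - if k = 0 then c 0 else 0) * H k Ω)) θ)) k = c k := by
  set W : (ℕ → ℂ) → ℝ := fun x => (I - (jjcl (x 0)).re) / κ with hW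
  have hWc : Continuous W := by
    have : Continuous fun x : ℕ → ℂ => jjcl (x 0) := jjcl_continuous.comp (continuous_apply 0)
    have h2 : Continuous fun x : ℕ → ℂ => (jjcl (x 0)).re := Complex.continuous_re.comp this
    fun_prop
  have hWb : ∀ x, (I - 1) / κ ≤ W x := fun x => by
    have h1 := (Complex.re_le_norm (jjcl (x 0))).trans (jjcl_norm (x 0))
    simp only [hW]
    gcongr
  have h1κ : 0 < (I - 1) / κ := div_pos (by linarith) hκ
  have hWp : ∀ x, 0 < W x := fun x => h1κ.trans_le (hWb x)
  set ψ : (ℕ → ℂ) → ℕ → ℂ := fun x k =>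
    -((2 * jjcl (x k) - if k = 0 then jjcl (x 0) else 0) * H k (W x)) with hψ
  have hC : ∀ k : ℕ, 0 ≤ C / (k:ℝ) ^ 2 := fun k => (norm_nonneg _).trans (hHb _ le_rfl k)
  have hψc : ∀ k, Continuous fun x => ψ x k := by
    intro k
    have h1 : Continuous fun x : ℕ → ℂ => jjcl (x k) := jjcl_continuous.comp (continuous_apply k)
    have h0 : Continuous fun x : ℕ → ℂ => jjcl (x 0) := jjcl_continuous.comp (continuous_apply 0)
    have h2 : Continuous fun x => H k (W x) :=
      (hH k).comp_continuous hWc (fun x => hWp x)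
    have h3 : Continuous fun x : ℕ → ℂ => (if k = 0 then jjcl (x 0) else 0 : ℂ) := by
      by_cases hk : k = 0
      · simp only [hk, if_true]; exact h0
      · simp only [hk, if_false]; exact continuous_const
    exact (((continuous_const.mul h1).sub h3).mul h2).neg
  have hψb : ∀ x k, ‖ψ x k‖ ≤ 3 * (C / (k:ℝ) ^ 2) := by
    intro x k
    simp only [hψ, norm_neg, norm_mul]
    have h1 : ‖2 * jjcl (x k) - if k = 0 then jjcl (x 0) else 0‖ ≤ 3 := by
      refine (norm_sub_le _ _).trans ?_
      have a1 : ‖2 * jjcl (x k)‖ ≤ 2 := by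
        rw [norm_mul]; simpa using jjcl_norm (x k)
      have a2 : ‖(if k = 0 then jjcl (x 0) else 0 : ℂ)‖ ≤ 1 := by
        split_ifs
        · exact jjcl_norm _
        · simp
      linarith
    exact mul_le_mul h1 (hHb _ (hWb x) k) (norm_nonneg _) (by norm_num)
  have hsumm : Summable fun k : ℕ => 3 * (C / (k:ℝ) ^ 2) := by
    have h2 : Summable fun k : ℕ => 1 / (k:ℝ) ^ 2 := Real.summable_one_div_nat_pow.2 (by norm_num)
    refine (h2.mul_left (3 * C)).congr fun k => by ring
  have hSc : Continuous fun p : (ℕ → ℂ) × ℝ => jjS (ψ p.1) p.2 := by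
    refine Complex.continuous_re.comp ?_
    refine continuous_tsum (fun k => ?_) hsumm (fun k p => ?_)
    · exact ((hψc k).comp continuous_fst).mul (by fun_prop)
    · rw [norm_mul, jj_norm_exp, mul_one]; exact hψb _ _
  have hFc : Continuous (fun (x : ℕ → ℂ) (k : ℕ) => jjc (fun θ => Real.sin (θ + jjS (ψ x) θ)) k) := by
    refine continuous_pi fun k => ?_
    unfold jjc
    refine continuous_const.mul ?_
    refine intervalIntegral.continuous_parametric_intervalIntegral_of_continuous' ?_ _ _
    simp only [Function.uncurry_def]
    have h1 : Continuous fun p : (ℕ → ℂ) × ℝ => Real.sin (p.2 + jjS (ψ p.1) p.2) :=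
      Real.continuous_sin.comp (continuous_snd.add hSc)
    have h2 : Continuous fun p : (ℕ → ℂ) × ℝ => Complex.exp (-(((k:ℤ):ℂ) * p.2 * Complex.I)) := by
      fun_prop
    exact h2.mul (Complex.continuous_ofReal.comp h1)
  obtain ⟨x, hx⟩ := jj_fixed _ hFc (fun x k => jjc_norm_le _ (fun θ => Real.abs_sin_le_one _) k)
  have hx1 : ∀ k, ‖x k‖ ≤ 1 := fun k => by
    rw [← hx]
    exact jjc_norm_le _ (fun θ => Real.abs_sin_le_one _) k
  have hcl : ∀ k, jjcl (x k) = x k := fun k => jjcl_of_le (hx1 k)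
  refine ⟨W x, x, hWp x, hWb x, hx1, ?_, fun k => ?_⟩
  · simp only [hW, hcl]
    field_simp
    ring
  · have := congrFun hx k
    simp only [hψ, hcl] at this
    exact this

lemma jj_exists_smooth (I κ : ℝ) (hI : 1 < I) (hκ : 0 < κ) (H : ℕ → ℝ → ℂ) (C : ℝ)
    (hH : ∀ k, ContinuousOn (H k) (Ioi 0))
    (hHb : ∀ Ω, (I - 1) / κ ≤ Ω → ∀ k : ℕ, ‖H k Ω‖ ≤ C / (k:ℝ) ^ 2) :
    ∃ (Ω : ℝ) (σ : ℕ → ℂ), 0 < Ω ∧ κ * Ω + (σ 0).re = I ∧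
      (∀ n : ℕ, Summable fun k : ℕ => (k:ℝ) ^ n * ‖σ k‖) ∧
      (∀ n : ℕ, Summable fun k : ℕ => (k:ℝ) ^ n * ‖-(σ k * H k Ω)‖) ∧
      ∀ θ, jjS σ θ = Real.sin (θ + jjS (fun k => -(σ k * H k Ω)) θ) := by
  obtain ⟨Ω, c, hΩ, hΩb, hc1, hmean, hfix⟩ := jj_exists I κ hI hκ H C hH hHb
  set σ : ℕ → ℂ := fun k => 2 * c k - if k = 0 then c 0 else 0 with hσ
  set ψ : ℕ → ℂ := fun k => -(σ k * H k Ω) with hψ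
  set f : ℝ → ℝ := fun θ => Real.sin (θ + jjS ψ θ) with hf
  have hfix' : ∀ k : ℕ, jjc f k = c k := hfix
  have hC : 0 ≤ C := by simpa using (norm_nonneg _).trans (hHb _ le_rfl 1)
  have hper : ∀ θ, f (θ + 2 * π) = f θ := by
    intro θ
    simp only [hf]
    rw [jjS_periodic, show θ + 2 * π + jjS ψ θ = θ + jjS ψ θ + 2 * π by ring, Real.sin_add_two_pi]
  have hσk : ∀ k : ℕ, k ≠ 0 → σ k = 2 * c k := fun k hk => by simp [hσ, hk]
  have hψb : ∀ k : ℕ, k ≠ 0 → ‖ψ k‖ ≤ 2 * C * ‖c k‖ / (k:ℝ) ^ 2 := by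
    intro k hk
    simp only [hψ, norm_neg, norm_mul, hσk k hk]
    rw [Complex.norm_two]
    calc 2 * ‖c k‖ * ‖H k Ω‖ ≤ 2 * ‖c k‖ * (C / (k:ℝ) ^ 2) := by gcongr; exact hHb Ω hΩb k
      _ = _ := by ring
  have hsq : ∀ n : ℕ, (Summable fun k : ℕ => (k:ℝ) ^ n * ‖ψ k‖) →
      ContDiff ℝ n f ∧ Summable fun k : ℕ => ((k:ℝ) ^ n * ‖c k‖) / k := by
    intro n hn
    have hcd : ContDiff ℝ n f := (contDiff_id.add (jjS_contDiff n hn)).sin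
    refine ⟨hcd, jj_summable_div (fun k => by positivity) ?_⟩
    have h1 := jjc_sq_summable _ (hcd.continuous_iteratedDeriv n le_rfl)
    have h2 := h1.comp_injective Nat.cast_injective
    refine h2.congr fun k => ?_
    simp only [Function.comp]
    rw [jjc_iteratedDeriv n f hcd hper, hfix' k]
    simp
  have hstep : ∀ n : ℕ, (Summable fun k : ℕ => ((k:ℝ) ^ n * ‖c k‖) / k) →
      Summable fun k : ℕ => (k:ℝ) ^ (n+1) * ‖ψ k‖ := by
    intro n hn
    refine Summable.of_norm_bounded_eventually_nat (hn.mul_left (2 * C)) ?_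
    filter_upwards [Filter.eventually_ge_atTop 1] with k hk
    have hk0 : (0:ℝ) < k := by exact_mod_cast hk
    rw [Real.norm_of_nonneg (by positivity)]
    calc (k:ℝ) ^ (n+1) * ‖ψ k‖ ≤ (k:ℝ) ^ (n+1) * (2 * C * ‖c k‖ / (k:ℝ) ^ 2) := by
          gcongr; exact hψb k (by omega)
      _ = _ := by field_simp; ring
  have hall : ∀ n : ℕ, Summable fun k : ℕ => (k:ℝ) ^ n * ‖ψ k‖ := by
    intro n
    induction n with
    | zero =>
      have h2 : Summable fun k : ℕ => 1 / (k:ℝ) ^ 2 :=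
        Real.summable_one_div_nat_pow.2 (by norm_num)
      refine Summable.of_norm_bounded_eventually_nat (h2.mul_left (2 * C)) ?_
      filter_upwards [Filter.eventually_ge_atTop 1] with k hk
      have hk0 : (0:ℝ) < k := by exact_mod_cast hk
      rw [Real.norm_of_nonneg (by positivity), pow_zero, one_mul]
      refine (hψb k (by omega)).trans ?_
      rw [mul_one_div]
      have hcc : 2 * C * ‖c k‖ ≤ 2 * C := by nlinarith [hc1 k, norm_nonneg (c k)]
      exact div_le_div_of_nonneg_right hcc (by positivity)
    | succ n ih => exact hstep n (hsq n ih).2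
  have hσall : ∀ n : ℕ, Summable fun k : ℕ => (k:ℝ) ^ n * ‖σ k‖ := by
    intro n
    refine Summable.of_norm_bounded_eventually_nat ((hsq (n+1) (hall _)).2.mul_left 2) ?_
    filter_upwards [Filter.eventually_ge_atTop 1] with k hk
    have hk0 : (0:ℝ) < k := by exact_mod_cast hk
    rw [Real.norm_of_nonneg (by positivity), hσk k (by omega), norm_mul, Complex.norm_two]
    apply le_of_eq
    field_simp
    ring
  have hc : Summable fun k : ℕ => ‖c k‖ := by
    refine Summable.of_norm_bounded_eventually_nat ((hsq 1 (hall _)).2) ?_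
    filter_upwards [Filter.eventually_ge_atTop 1] with k hk
    have hk0 : (0:ℝ) < k := by exact_mod_cast hk
    rw [Real.norm_of_nonneg (by positivity)]
    apply le_of_eq
    field_simp
  refine ⟨Ω, σ, hΩ, ?_, hσall, hall, fun θ => ?_⟩
  · have : σ 0 = c 0 := by simp [hσ]; ring
    rw [this]; exact hmean
  · have hcs : Summable fun k : ℕ => ‖jjc f k‖ := hc.congr fun k => by rw [hfix']
    have h1 := jjc_sum f (hsq 0 (hall 0)).1.continuous hper hcs θ
    have h0 : jjc f 0 = c 0 := hfix' 0
    simp only [hfix', h0] at h1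
    exact h1

end Fixed

section Multipliers

/-- Load polynomial. -/
noncomputable def jjP (L R γ : ℝ) (z : ℂ) : ℂ := L * z ^ 2 + R * z + γ

/-- Denominator of the in-phase multiplier. -/
noncomputable def jjD (β L R γ : ℝ) (z : ℂ) : ℂ := (β * z + 1) * jjP L R γ z + z

lemma jjP_eq (L R γ ω : ℝ) : jjP L R γ (ω * Complex.I) = ⟨γ - L * ω ^ 2, R * ω⟩ := by
  apply Complex.ext <;> simp [jjP, pow_two] <;> ring

lemma jjD_eq (β L R γ ω : ℝ) : jjD β L R γ (ω * Complex.I) =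
    ⟨(γ - L * ω ^ 2) - β * ω * (R * ω), R * ω + β * ω * (γ - L * ω ^ 2) + ω⟩ := by
  rw [jjD, jjP_eq]
  apply Complex.ext <;> simp <;> ring

lemma jjD_normSq (β L R γ ω : ℝ) : ‖jjD β L R γ (ω * Complex.I)‖ ^ 2 =
    ((γ - L * ω ^ 2) ^ 2 + (R * ω) ^ 2) + ω ^ 2 * ((β * (γ - L * ω ^ 2) + 1) ^ 2 +
      β ^ 2 * (R * ω) ^ 2) + 2 * ω * (R * ω) := by
  rw [← Complex.normSq_eq_norm_sq, jjD_eq, Complex.normSq_mk]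
  ring

lemma jjP_normSq (L R γ ω : ℝ) : ‖jjP L R γ (ω * Complex.I)‖ ^ 2 =
    (γ - L * ω ^ 2) ^ 2 + (R * ω) ^ 2 := by
  rw [← Complex.normSq_eq_norm_sq, jjP_eq, Complex.normSq_mk]
  ring

lemma jjP_le_jjD (β L R γ ω : ℝ) (hR : 0 ≤ R) :
    ‖jjP L R γ (ω * Complex.I)‖ ≤ ‖jjD β L R γ (ω * Complex.I)‖ := by
  refine (sq_le_sq₀ (norm_nonneg _) (norm_nonneg _)).1 ?_
  rw [jjD_normSq, jjP_normSq]
  have : 0 ≤ ω ^ 2 * R := by positivity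
  have : 0 ≤ ω ^ 2 * ((β * (γ - L * ω ^ 2) + 1) ^ 2 + β ^ 2 * (R * ω) ^ 2) := by positivity
  nlinarith

lemma jj_omega_le (β L R γ ω : ℝ) (hβ : 0 < β) (hR : 0 ≤ R) (hω : 0 < ω) :
    ω ≤ (2 + β * ω) * ‖jjD β L R γ (ω * Complex.I)‖ := by
  have h1 : (ω * Complex.I : ℂ) = jjD β L R γ (ω * Complex.I) -
      (β * (ω * Complex.I) + 1) * jjP L R γ (ω * Complex.I) := by rw [jjD]; ring
  have h2 : ‖(ω * Complex.I : ℂ)‖ = ω := by simp [abs_of_pos hω]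
  have h3 : ‖(β * (ω * Complex.I) + 1 : ℂ)‖ ≤ β * ω + 1 := by
    refine (norm_add_le _ _).trans ?_
    simp [abs_of_pos hω, abs_of_pos hβ]
  have h4 := norm_sub_le (jjD β L R γ (ω * Complex.I))
    ((β * (ω * Complex.I) + 1) * jjP L R γ (ω * Complex.I))
  rw [← h1, h2, norm_mul] at h4
  have h5 := mul_le_mul h3 (jjP_le_jjD β L R γ ω hR) (norm_nonneg _) (by positivity)
  linarith

lemma jjD_ne (β L R γ ω : ℝ) (hβ : 0 < β) (hR : 0 ≤ R) (hω : 0 < ω) :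
    jjD β L R γ (ω * Complex.I) ≠ 0 := by
  intro h
  have := jj_omega_le β L R γ ω hβ hR hω
  rw [h] at this
  simp at this
  linarith

lemma jjP_bound (β L R γ : ℝ) (hβ : 0 < β) (hR : 0 ≤ R) (hL : 0 ≤ L) (hγ : 0 ≤ γ) :
    ∃ C : ℝ, 0 ≤ C ∧ ∀ ω : ℝ, 0 < ω →
      ω * ‖jjP L R γ (ω * Complex.I)‖ ≤ C * ‖jjD β L R γ (ω * Complex.I)‖ := by
  set K := (γ + 2 / β) / L with hK
  have hK0 : 0 ≤ K := by positivity
  refine ⟨Real.sqrt (5 / β ^ 2 + K), Real.sqrt_nonneg _, fun ω hω => ?_⟩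
  refine (sq_le_sq₀ (by positivity) (by positivity)).1 ?_
  rw [mul_pow, mul_pow, Real.sq_sqrt (by positivity), jjP_normSq]
  have hD := jjD_normSq β L R γ ω
  set D := ‖jjD β L R γ (ω * Complex.I)‖ ^ 2
  have hD0 : 0 ≤ D := by positivity
  set a := γ - L * ω ^ 2 with ha
  set b := R * ω with hb
  have hb0 : 0 ≤ b := by positivity
  have e1 : ω ^ 2 * (β * a + 1) ^ 2 ≤ D := by
    have : 0 ≤ 2 * ω * b := by positivity
    have : 0 ≤ ω ^ 2 * (β ^ 2 * b ^ 2) := by positivity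
    nlinarith [sq_nonneg a, sq_nonneg b]
  have e2 : ω ^ 2 * (β ^ 2 * b ^ 2) ≤ D := by
    have : 0 ≤ 2 * ω * b := by positivity
    have : 0 ≤ ω ^ 2 * (β * a + 1) ^ 2 := by positivity
    nlinarith [sq_nonneg a, sq_nonneg b]
  have e3 : a ^ 2 ≤ D := by
    have : 0 ≤ 2 * ω * b := by positivity
    have : 0 ≤ ω ^ 2 * (β * a + 1) ^ 2 := by positivity
    have : 0 ≤ ω ^ 2 * (β ^ 2 * b ^ 2) := by positivity
    nlinarith [sq_nonneg b]
  have f2 : ω ^ 2 * b ^ 2 ≤ 1 / β ^ 2 * D := by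
    rw [one_div_mul_eq_div, le_div_iff₀ (by positivity)]
    linarith
  have f1 : ω ^ 2 * a ^ 2 ≤ (4 / β ^ 2 + K) * D := by
    have key : (ω ^ 2 * (β * a) ^ 2 ≤ 4 * D) → ω ^ 2 * a ^ 2 ≤ (4 / β ^ 2 + K) * D := by
      intro h
      have : ω ^ 2 * a ^ 2 ≤ 4 / β ^ 2 * D := by
        rw [div_mul_eq_mul_div, le_div_iff₀ (by positivity)]
        linarith
      nlinarith [mul_nonneg hK0 hD0]
    by_cases h1 : 0 ≤ a
    · apply key
      have : (β * a) ^ 2 ≤ (β * a + 1) ^ 2 := by nlinarith [mul_nonneg hβ.le h1]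
      have := mul_le_mul_of_nonneg_left this (sq_nonneg ω)
      linarith
    by_cases h2 : β * a ≤ -2
    · apply key
      have : (β * a) ^ 2 ≤ 4 * (β * a + 1) ^ 2 := by nlinarith
      have := mul_le_mul_of_nonneg_left this (sq_nonneg ω)
      linarith
    push Not at h1 h2
    have hL0 : 0 < L := by
      rcases hL.eq_or_lt with h | h
      · rw [← h] at ha; linarith
      · exact h
    have h3 : ω ^ 2 ≤ K := by
      rw [hK, le_div_iff₀ hL0]
      have : -(2 / β) ≤ a := by
        rw [← neg_div, div_le_iff₀ hβ]; linarith
      linarith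
    have h4 := mul_le_mul h3 e3 (sq_nonneg a) hK0
    have : 0 ≤ 4 / β ^ 2 * D := by positivity
    nlinarith
  have : (5 / β ^ 2 + K) * D = (4 / β ^ 2 + K) * D + 1 / β ^ 2 * D := by ring
  rw [this]
  linarith

/-- Fourier multiplier. -/
noncomputable def jjH (M : ℕ) (β L R γ : ℝ) (k : ℕ) (Ω : ℝ) : ℂ :=
  if k = 0 then 0 else if M ∣ k then
    jjP L R γ (((k * Ω : ℝ) : ℂ) * Complex.I) / ((((k * Ω : ℝ) : ℂ) * Complex.I) * jjD β L R γ (((k * Ω : ℝ) : ℂ) * Complex.I))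
  else 1 / (β * (((k * Ω : ℝ) : ℂ) * Complex.I) ^ 2 + ((k * Ω : ℝ) : ℂ) * Complex.I)

lemma jjq_ne (β ω : ℝ) (hω : 0 < ω) : (β * ((ω : ℂ) * Complex.I) ^ 2 + (ω : ℂ) * Complex.I) ≠ 0 := by
  intro h
  have := congrArg Complex.im h
  simp [pow_two] at this
  linarith

lemma jjq_le (β ω : ℝ) (hβ : 0 < β) (hω : 0 < ω) :
    β * ω ^ 2 ≤ ‖(β * ((ω : ℂ) * Complex.I) ^ 2 + (ω : ℂ) * Complex.I)‖ := by
  refine le_trans ?_ (Complex.abs_re_le_norm _)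
  have : (β * ((ω : ℂ) * Complex.I) ^ 2 + (ω : ℂ) * Complex.I).re = -(β * ω ^ 2) := by
    simp [pow_two]
  rw [this, abs_neg]
  exact le_abs_self _

lemma jjH_continuousOn (M : ℕ) (β L R γ : ℝ) (hβ : 0 < β) (hR : 0 ≤ R) (k : ℕ) :
    ContinuousOn (jjH M β L R γ k) (Set.Ioi 0) := by
  unfold jjH
  split_ifs with h1 h2
  · exact continuousOn_const
  · have hk : (0:ℝ) < k := by exact_mod_cast Nat.pos_of_ne_zero h1
    refine ContinuousOn.div ?_ ?_ ?_
    · unfold jjP; fun_prop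
    · unfold jjD jjP; fun_prop
    · intro Ω hΩ
      have hω : 0 < k * Ω := mul_pos hk hΩ
      refine mul_ne_zero (mul_ne_zero ?_ Complex.I_ne_zero) (jjD_ne β L R γ _ hβ hR hω)
      exact_mod_cast hω.ne'
  · have hk : (0:ℝ) < k := by exact_mod_cast Nat.pos_of_ne_zero h1
    refine ContinuousOn.div continuousOn_const (by fun_prop) ?_
    intro Ω hΩ
    exact jjq_ne β _ (mul_pos hk hΩ)

lemma jjH_bound (M : ℕ) (β L R γ : ℝ) (hβ : 0 < β) (hR : 0 ≤ R) (hL : 0 ≤ L) (hγ : 0 ≤ γ)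
    (Ω₁ : ℝ) (hΩ₁ : 0 < Ω₁) :
    ∃ C : ℝ, ∀ Ω, Ω₁ ≤ Ω → ∀ k : ℕ, ‖jjH M β L R γ k Ω‖ ≤ C / (k:ℝ) ^ 2 := by
  obtain ⟨C, hC, hb⟩ := jjP_bound β L R γ hβ hR hL hγ
  refine ⟨(C + 1 / β) / Ω₁ ^ 2, fun Ω hΩ k => ?_⟩
  unfold jjH
  have hΩ0 : 0 < Ω := hΩ₁.trans_le hΩ
  by_cases h1 : k = 0
  · simp [h1]
  have hk : (0:ℝ) < k := by exact_mod_cast Nat.pos_of_ne_zero h1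
  have hω : 0 < k * Ω := mul_pos hk hΩ0
  have hle : Ω₁ ^ 2 * (k:ℝ) ^ 2 ≤ (k * Ω) ^ 2 := by
    rw [mul_pow, mul_comm]; gcongr
  rw [if_neg h1, div_div]
  have hmain : (C + 1 / β) / (k * Ω) ^ 2 ≤ (C + 1 / β) / (Ω₁ ^ 2 * (k:ℝ) ^ 2) :=
    div_le_div_of_nonneg_left (by positivity) (by positivity) hle
  refine le_trans ?_ hmain
  generalize (k:ℝ) * Ω = ω at hω
  split_ifs with h2
  · have hD := norm_pos_iff.2 (jjD_ne β L R γ ω hβ hR hω)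
    rw [norm_div, norm_mul, norm_mul, Complex.norm_I, mul_one, Complex.norm_real,
      Real.norm_of_nonneg hω.le, div_le_div_iff₀ (by positivity) (by positivity)]
    have h3 := mul_le_mul_of_nonneg_left (hb ω hω) hω.le
    have : 0 ≤ 1 / β * (ω * ‖jjD β L R γ (ω * Complex.I)‖) := by positivity
    nlinarith
  · rw [norm_div, norm_one]
    have h3 := jjq_le β ω hβ hω
    calc 1 / ‖(β * ((ω : ℂ) * Complex.I) ^ 2 + (ω : ℂ) * Complex.I)‖ ≤ 1 / (β * ω ^ 2) :=
          one_div_le_one_div_of_le (by positivity) h3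
      _ = (0 + 1 / β) / ω ^ 2 := by rw [zero_add, div_div]
      _ ≤ _ := by gcongr

end Multipliers

section Assembly

/-- Coefficients of the derivative. -/
noncomputable def jjd (Ω : ℝ) (a : ℕ → ℂ) (k : ℕ) : ℂ := (((k * Ω : ℝ) : ℂ) * Complex.I) * a k

lemma jjd_rapid {Ω : ℝ} {a : ℕ → ℂ} (h : ∀ n : ℕ, Summable fun k : ℕ => (k:ℝ) ^ n * ‖a k‖) :
    ∀ n : ℕ, Summable fun k : ℕ => (k:ℝ) ^ n * ‖jjd Ω a k‖ := by
  intro n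
  refine ((h (n+1)).mul_left |Ω|).congr fun k => ?_
  simp only [jjd, norm_mul, Complex.norm_I, Complex.norm_real, Real.norm_eq_abs, abs_mul,
    Nat.abs_cast]
  ring

lemma jj_rapid_norm {a : ℕ → ℂ} (h : ∀ n : ℕ, Summable fun k : ℕ => (k:ℝ) ^ n * ‖a k‖) :
    Summable fun k : ℕ => ‖a k‖ := by simpa using h 0

lemma jj_hasDeriv {a : ℕ → ℂ} (h : ∀ n : ℕ, Summable fun k : ℕ => (k:ℝ) ^ n * ‖a k‖)
    (A B Ω t : ℝ) : HasDerivAt (fun t => A + B * t + jjS a (Ω * t)) (B + jjS (jjd Ω a) (Ω * t)) t := by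
  have h1 := (jjS_hasDerivAt (h 1) (Ω * t)).comp t ((hasDerivAt_id t).const_mul Ω)
  have h2 := (((hasDerivAt_id t).const_mul B).const_add A).add h1
  have e : jjS (jjd Ω a) (Ω * t) = Ω * jjS (fun k => k * Complex.I * a k) (Ω * t) := by
    rw [← jjS_smul]
    congr 1
    funext k
    simp only [jjd]
    push_cast
    ring
  have h3 : HasDerivAt (fun t => A + B * t + jjS a (Ω * t))
    (B * 1 + jjS (fun k => k * Complex.I * a k) (Ω * t) * (Ω * 1)) t := h2
  refine h3.congr_deriv ?_
  rw [e]
  ring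

lemma jj_deriv {a : ℕ → ℂ} (h : ∀ n : ℕ, Summable fun k : ℕ => (k:ℝ) ^ n * ‖a k‖)
    (A B Ω : ℝ) : deriv (fun t => A + B * t + jjS a (Ω * t)) =
      fun t => B + jjS (jjd Ω a) (Ω * t) := by
  funext t
  exact (jj_hasDeriv h A B Ω t).deriv

lemma jj_deriv2 {a : ℕ → ℂ} (h : ∀ n : ℕ, Summable fun k : ℕ => (k:ℝ) ^ n * ‖a k‖)
    (A B Ω : ℝ) : deriv (deriv (fun t => A + B * t + jjS a (Ω * t))) =
      fun t => jjS (jjd Ω (jjd Ω a)) (Ω * t) := by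
  rw [jj_deriv h]
  have := jj_deriv (jjd_rapid (Ω := Ω) h) B 0 Ω
  simpa using this

lemma jj_contDiff {a : ℕ → ℂ} (h : ∀ n : ℕ, Summable fun k : ℕ => (k:ℝ) ^ n * ‖a k‖)
    (A B Ω : ℝ) : ContDiff ℝ 2 (fun t => A + B * t + jjS a (Ω * t)) := by
  have h1 : ContDiff ℝ 2 (jjS a) := jjS_contDiff 2 (h 2)
  have h2 : ContDiff ℝ 2 (fun t : ℝ => Ω * t) := by fun_prop
  have h3 : ContDiff ℝ 2 (fun t : ℝ => A + B * t) := by fun_prop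
  exact h3.add (h1.comp h2)

lemma jj_roots (M k : ℕ) (hM : 0 < M) :
    ∑ j ∈ Finset.range M, Complex.exp (-(k * ((j * (2 * π) / M : ℝ) : ℂ) * Complex.I)) =
      if M ∣ k then (M:ℂ) else 0 := by
  have hM0 : (M:ℂ) ≠ 0 := by exact_mod_cast hM.ne'
  set ζ := Complex.exp (-(2 * π * Complex.I * (k / M))) with hζ
  have e : ∀ j : ℕ, Complex.exp (-(k * ((j * (2 * π) / M : ℝ) : ℂ) * Complex.I)) = ζ ^ j := by
    intro j
    rw [hζ, ← Complex.exp_nat_mul]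
    congr 1
    push_cast
    ring
  simp only [e]
  have hpow : ζ ^ M = 1 := by
    rw [hζ, ← Complex.exp_nat_mul, Complex.exp_eq_one_iff]
    refine ⟨-(k:ℤ), ?_⟩
    push_cast
    field_simp
  split_ifs with h
  · obtain ⟨m, rfl⟩ := h
    have : ζ = 1 := by
      rw [hζ, Complex.exp_eq_one_iff]
      refine ⟨-(m:ℤ), ?_⟩
      push_cast
      field_simp
    simp [this]
  · have hne : ζ ≠ 1 := by
      intro h1
      rw [hζ, Complex.exp_eq_one_iff] at h1
      obtain ⟨n, hn⟩ := h1
      apply h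
      have h2 : (k:ℂ) = M * ((-n : ℤ) : ℂ) := by
        have hpi : (2 * π * Complex.I : ℂ) ≠ 0 := Complex.two_pi_I_ne_zero
        have : (2 * π * Complex.I : ℂ) * (k / M) = (2 * π * Complex.I) * (-n) := by
          linear_combination -hn
        have := mul_left_cancel₀ hpi this
        rw [div_eq_iff hM0] at this
        push_cast
        linear_combination this
      have h3 : (k:ℤ) = M * (-n) := by exact_mod_cast h2
      exact Int.natCast_dvd_natCast.1 ⟨-n, h3⟩
    rw [geom_sum_eq hne, hpow]
    simp

lemma jj_sum_fin (l M : ℕ) (hl : 0 < l) (g : ℕ → ℝ) :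
    ∑ j : Fin (M * l), g ((j : ℕ) / l) = l * ∑ h ∈ Finset.range M, g h := by
  rw [Fin.sum_univ_eq_sum_range (fun j => g (j / l)) (M * l)]
  induction M with
  | zero => simp
  | succ M ih =>
    rw [Finset.sum_range_succ, mul_add, ← ih, Nat.succ_mul, Finset.sum_range_add]
    congr 1
    rw [Finset.sum_congr rfl (g := fun _ => g M)]
    · simp
    · intro x hx
      have hx' := Finset.mem_range.1 hx
      rw [mul_comm, Nat.mul_add_div hl, Nat.div_eq_of_lt hx', add_zero]

/-- Load coefficients. -/
noncomputable def jjQ (M : ℕ) (β L R γ Ω : ℝ) (σ : ℕ → ℂ) (k : ℕ) : ℂ :=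
  if k = 0 then 0 else if M ∣ k then
    -(σ k / jjD β L R γ (((k * Ω : ℝ) : ℂ) * Complex.I)) else 0

lemma jjQ_rapid (M : ℕ) (β L R γ Ω : ℝ) (hβ : 0 < β) (hR : 0 ≤ R) (hΩ : 0 < Ω) {σ : ℕ → ℂ}
    (h : ∀ n : ℕ, Summable fun k : ℕ => (k:ℝ) ^ n * ‖σ k‖) :
    ∀ n : ℕ, Summable fun k : ℕ => (k:ℝ) ^ n * ‖jjQ M β L R γ Ω σ k‖ := by
  intro n
  refine Summable.of_nonneg_of_le (fun k => by positivity) (fun k => ?_)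
    ((h n).mul_left (2 / Ω + β))
  have hb : ‖jjQ M β L R γ Ω σ k‖ ≤ (2 / Ω + β) * ‖σ k‖ := by
    have hnn : 0 ≤ (2 / Ω + β) * ‖σ k‖ := by positivity
    unfold jjQ
    split_ifs with h1 h2
    · simpa using hnn
    · have hk : (1:ℝ) ≤ k := by exact_mod_cast Nat.one_le_iff_ne_zero.2 h1
      have hω : 0 < k * Ω := by positivity
      have hωΩ : Ω ≤ k * Ω := by nlinarith
      have h3 := jj_omega_le β L R γ _ hβ hR hω
      have hD := norm_pos_iff.2 (jjD_ne β L R γ _ hβ hR hω)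
      generalize (k:ℝ) * Ω = ω at *
      rw [norm_neg, norm_div, div_le_iff₀ hD]
      have h4 : 1 ≤ (2 / Ω + β) * ‖jjD β L R γ (ω * Complex.I)‖ := by
        have h5 : 1 ≤ (2 / ω + β) * ‖jjD β L R γ (ω * Complex.I)‖ := by
          have : (2 / ω + β) * ‖jjD β L R γ (ω * Complex.I)‖ =
            ((2 + β * ω) * ‖jjD β L R γ (ω * Complex.I)‖) / ω := by field_simp
          rw [this, le_div_iff₀ hω]
          linarith
        refine h5.trans ?_
        gcongr
      nlinarith [norm_nonneg (σ k)]
    · simpa using hnn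
  calc (k:ℝ) ^ n * ‖jjQ M β L R γ Ω σ k‖ ≤ (k:ℝ) ^ n * ((2 / Ω + β) * ‖σ k‖) := by gcongr
    _ = _ := by ring

lemma jj_exists_core (M : ℕ) (hM : 0 < M) (β I L R γ : ℝ) (hI : 1 < I) (hβ : 0 < β)
    (hR : 0 ≤ R) (hL : 0 ≤ L) (hγ : 0 ≤ γ) (hRγ : 0 < R + γ) :
    ∃ (T : ℝ) (φ Q : ℝ → ℝ), 0 < T ∧
      ContDiff ℝ 2 φ ∧ ContDiff ℝ 2 Q ∧
      (∀ t, φ (t + T) = φ t + 2 * π) ∧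
      (∀ t : ℝ, deriv Q (t + T / (M : ℝ)) = deriv Q t) ∧
      (∀ t : ℝ, β * deriv (deriv φ) t + deriv φ t + Real.sin (φ t) + deriv Q t = I) ∧
      (∀ t : ℝ, L * deriv (deriv Q) t + R * deriv Q t + γ * Q t
          = (1 / (M : ℝ)) *
              ∑ j ∈ Finset.range M, deriv φ (t - (j : ℝ) * T / (M : ℝ))) := by
  have hMR : (0:ℝ) < M := by exact_mod_cast hM
  obtain ⟨κ, hκ, hAB⟩ : ∃ κ : ℝ, 0 < κ ∧ ∀ Ω : ℝ, ∃ A B : ℝ, κ * Ω = Ω + B ∧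
      R * B + γ * A = Ω ∧ γ * B = 0 := by
    rcases hγ.eq_or_lt with h | h
    · have hR0 : 0 < R := by linarith
      refine ⟨1 + 1 / R, by positivity, fun Ω => ⟨0, Ω / R, by ring, ?_, ?_⟩⟩
      · field_simp; ring
      · rw [← h]; ring
    · refine ⟨1, one_pos, fun Ω => ⟨Ω / γ, 0, by ring, ?_, by ring⟩⟩
      field_simp; ring
  obtain ⟨C, hC⟩ := jjH_bound M β L R γ hβ hR hL hγ ((I - 1) / κ) (div_pos (by linarith) hκ)
  obtain ⟨Ω, σ, hΩ, hmean, hσ, hψ, hsin⟩ := jj_exists_smooth I κ hI hκ (jjH M β L R γ) C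
    (jjH_continuousOn M β L R γ hβ hR) hC
  obtain ⟨A, B, hB1, hB2, hB3⟩ := hAB Ω
  set ψ : ℕ → ℂ := fun k => -(σ k * jjH M β L R γ k Ω) with hψd
  replace hψ : ∀ n : ℕ, Summable fun k : ℕ => (k:ℝ) ^ n * ‖ψ k‖ := hψ
  have hq := jjQ_rapid M β L R γ Ω hβ hR hΩ hσ
  set q := jjQ M β L R γ Ω σ with hqd
  have dφ := jj_deriv hψ 0 Ω Ω
  have ddφ := jj_deriv2 hψ 0 Ω Ω
  have dQ := jj_deriv hq A B Ω
  have ddQ := jj_deriv2 hq A B Ω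
  refine ⟨2 * π / Ω, fun t => 0 + Ω * t + jjS ψ (Ω * t), fun t => A + B * t + jjS q (Ω * t),
    by positivity, jj_contDiff hψ _ _ _, jj_contDiff hq _ _ _, ?_, ?_, ?_, ?_⟩
  · intro t
    have : Ω * (t + 2 * π / Ω) = Ω * t + 2 * π := by field_simp
    simp only [this, jjS_periodic]
    ring
  · intro t
    rw [dQ]
    simp only
    congr 1
    have : Ω * t = Ω * (t + 2 * π / Ω / M) - 2 * π / M := by field_simp; ring
    rw [this, jjS_shift]
    congr 1
    funext k
    simp only [jjd, hqd, jjQ]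
    split_ifs with h1 h2
    · simp
    · obtain ⟨m, rfl⟩ := h2
      have : Complex.exp (-(((M * m : ℕ) : ℂ) * ((2 * π / M : ℝ) : ℂ) * Complex.I)) = 1 := by
        rw [Complex.exp_eq_one_iff]
        refine ⟨-(m:ℤ), ?_⟩
        have : (M:ℂ) ≠ 0 := by exact_mod_cast hM.ne'
        push_cast
        field_simp
      rw [this, one_mul]
    · simp
  · intro t
    rw [ddφ, dφ, dQ]
    have hs := hsin (Ω * t)
    simp only
    rw [show 0 + Ω * t + jjS ψ (Ω * t) = Ω * t + jjS ψ (Ω * t) by ring, ← hs]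
    have r1 := jj_rapid_norm (jjd_rapid (Ω := Ω) hψ)
    have r2 := jj_rapid_norm (jjd_rapid (Ω := Ω) (jjd_rapid (Ω := Ω) hψ))
    have r3 := jj_rapid_norm hσ
    have r4 := jj_rapid_norm (jjd_rapid (Ω := Ω) hq)
    have r2' : Summable fun k : ℕ => ‖(β:ℂ) * jjd Ω (jjd Ω ψ) k‖ := by
      simpa only [norm_mul] using r2.mul_left ‖(β:ℂ)‖
    have s1 := (r2'.add r1).of_nonneg_of_le (fun k => norm_nonneg _)
      (fun k => norm_add_le ((β:ℂ) * jjd Ω (jjd Ω ψ) k) (jjd Ω ψ k))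
    have s2 := (s1.add r3).of_nonneg_of_le (fun k => norm_nonneg _)
      (fun k => norm_add_le ((β:ℂ) * jjd Ω (jjd Ω ψ) k + jjd Ω ψ k) (σ k))
    have key : β * jjS (jjd Ω (jjd Ω ψ)) (Ω * t) + jjS (jjd Ω ψ) (Ω * t) + jjS σ (Ω * t) +
        jjS (jjd Ω q) (Ω * t) = (σ 0).re := by
      rw [← jjS_smul, ← jjS_add r2' r1, ← jjS_add s1 r3, ← jjS_add s2 r4, jjS_single]
      · simp [jjd]
      · intro k hk
        have hk' : (0:ℝ) < k := by exact_mod_cast Nat.pos_of_ne_zero hk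
        have hω : 0 < k * Ω := by positivity
        simp only [jjd, hψd, hqd, jjQ, jjH, hk, if_false]
        generalize (k:ℝ) * Ω = ω at *
        have hz : ((ω:ℂ) * Complex.I) ≠ 0 :=
          mul_ne_zero (by exact_mod_cast hω.ne') Complex.I_ne_zero
        split_ifs with h2
        · have hD := jjD_ne β L R γ ω hβ hR hω
          have hDe : jjD β L R γ (ω * Complex.I) =
            (β * (ω * Complex.I) + 1) * jjP L R γ (ω * Complex.I) + ω * Complex.I := rfl
          generalize (ω:ℂ) * Complex.I = z at *
          generalize jjD β L R γ z = D at *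
          generalize jjP L R γ z = P at *
          field_simp
          rw [hDe]
          ring
        · have hq0 := jjq_ne β ω hω
          have hX := mul_one_div_cancel hq0
          linear_combination (-σ k) * hX
    linarith
  · intro t
    rw [ddQ, dQ, dφ]
    simp only
    have sh : ∀ j : ℕ, Ω * (t - (j:ℝ) * (2 * π / Ω) / M) = Ω * t - (j * (2 * π) / M : ℝ) := by
      intro j; field_simp
    simp only [sh, jjS_shift, Finset.sum_add_distrib]
    have r0 := jj_rapid_norm (jjd_rapid (Ω := Ω) hψ)
    rw [← jjS_sum]
    swap
    · intro j
      refine r0.congr fun k => ?_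
      rw [norm_mul]
      have := jj_norm_exp k (-(j * (2 * π) / M))
      rw [show (-(k * ((j * (2 * π) / M : ℝ) : ℂ) * Complex.I)) =
        k * ((-(j * (2 * π) / M) : ℝ) : ℂ) * Complex.I by push_cast; ring, this, one_mul]
    simp only [← Finset.sum_mul, jj_roots M _ hM]
    have r1 := jj_rapid_norm (jjd_rapid (Ω := Ω) hq)
    have r2 := jj_rapid_norm (jjd_rapid (Ω := Ω) (jjd_rapid (Ω := Ω) hq))
    have r3 := jj_rapid_norm hq
    have r2' : Summable fun k : ℕ => ‖(L:ℂ) * jjd Ω (jjd Ω q) k‖ := by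
      simpa only [norm_mul] using r2.mul_left ‖(L:ℂ)‖
    have r1' : Summable fun k : ℕ => ‖(R:ℂ) * jjd Ω q k‖ := by
      simpa only [norm_mul] using r1.mul_left ‖(R:ℂ)‖
    have r3' : Summable fun k : ℕ => ‖(γ:ℂ) * q k‖ := by
      simpa only [norm_mul] using r3.mul_left ‖(γ:ℂ)‖
    have s1 := (r2'.add r1').of_nonneg_of_le (fun k => norm_nonneg _)
      (fun k => norm_add_le ((L:ℂ) * jjd Ω (jjd Ω q) k) ((R:ℂ) * jjd Ω q k))
    have key : L * jjS (jjd Ω (jjd Ω q)) (Ω * t) + R * jjS (jjd Ω q) (Ω * t) +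
        γ * jjS q (Ω * t) =
        (1 / (M:ℝ)) * jjS (fun k => (if M ∣ k then (M:ℂ) else 0) * jjd Ω ψ k) (Ω * t) := by
      rw [← jjS_smul, ← jjS_smul, ← jjS_smul, ← jjS_smul, ← jjS_add r2' r1', ← jjS_add s1 r3']
      congr 1
      funext k
      have hMc : (M:ℂ) ≠ 0 := by exact_mod_cast hM.ne'
      simp only [jjd, hψd, hqd, jjQ, jjH]
      by_cases hk : k = 0
      · simp [hk]
      simp only [hk, if_false]
      have hk' : (0:ℝ) < k := by exact_mod_cast Nat.pos_of_ne_zero hk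
      have hω : 0 < k * Ω := by positivity
      generalize (k:ℝ) * Ω = ω at *
      have hz : ((ω:ℂ) * Complex.I) ≠ 0 :=
        mul_ne_zero (by exact_mod_cast hω.ne') Complex.I_ne_zero
      split_ifs with h2
      · have hD := jjD_ne β L R γ ω hβ hR hω
        have hP : jjP L R γ (ω * Complex.I) = L * (ω * Complex.I) ^ 2 + R * (ω * Complex.I) + γ := rfl
        rw [hP]
        generalize (ω:ℂ) * Complex.I = z at *
        generalize jjD β L R γ z = D at *
        push_cast
        field_simp
        ring
      · simp
    rw [mul_add (1 / (M:ℝ)), ← key]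
    simp only [Finset.sum_const, Finset.card_range, nsmul_eq_mul]
    have : 1 / (M:ℝ) * (M * Ω) = Ω := by field_simp
    rw [this]
    linear_combination hB2 + t * hB3

end Assembly

/-- **Theorem 1 (Aronson–Huang).** For any divisor `M` of `N` with `l = N / M`, bias
current `I > 1`, junction capacitance `β > 0` and load parameters `L, R, γ ≥ 0` with
`R + γ > 0`, there exists an `(l, M, N)` single waveform solution of the Josephson
junction system with LRC load: a running waveform `φ` of period `T > 0` and a load
charge `Q` with `T/M`-periodic load current `Q'` satisfying
`β φ'' + φ' + sin φ + Q' = I` and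
`L Q'' + R Q' + γ Q = (l/N) ∑_{j=0}^{M-1} φ'(t − j T / M)`; equivalently the tuple
`φ_j(t) = φ(t − hT/M)` for `j = hl+1, …, (h+1)l` together with `Q` solves the system. -/
theorem exists_lMN_swfs (N M : ℕ) (hN : 1 ≤ N) (hM : M ∣ N) (l : ℕ) (hl : l = N / M)
    (β I L R γ : ℝ) (hI : 1 < I) (hβ : 0 < β)
    (hR : 0 ≤ R) (hL : 0 ≤ L) (hγ : 0 ≤ γ) (hRγ : 0 < R + γ) :
    ∃ (T : ℝ) (φ Q : ℝ → ℝ), 0 < T ∧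
      ContDiff ℝ 2 φ ∧ ContDiff ℝ 2 Q ∧
      IsRunning φ T ∧
      (∀ t : ℝ, deriv Q (t + T / (M : ℝ)) = deriv Q t) ∧
      (∀ t : ℝ, β * deriv (deriv φ) t + deriv φ t + Real.sin (φ t) + deriv Q t = I) ∧
      (∀ t : ℝ, L * deriv (deriv Q) t + R * deriv Q t + γ * Q t
          = ((l : ℝ) / (N : ℝ)) *
              ∑ j ∈ Finset.range M, deriv φ (t - (j : ℝ) * T / (M : ℝ))) ∧
      JJSystem N β I L R γ
        (fun j t => φ (t - (((j : ℕ) / l : ℕ) : ℝ) * T / (M : ℝ))) Q := by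
  obtain ⟨m, rfl⟩ := hM
  have hM0 : 0 < M := Nat.pos_of_ne_zero (by rintro rfl; simp at hN)
  have hm0 : 0 < m := Nat.pos_of_ne_zero (by rintro rfl; simp at hN)
  rw [Nat.mul_div_cancel_left _ hM0] at hl
  subst hl
  obtain ⟨T, φ, Q, hT, h1, h2, h3, h4, h5, h6⟩ := jj_exists_core M hM0 β I L R γ hI hβ hR hL hγ hRγ
  have hMR : (0:ℝ) < M := by exact_mod_cast hM0
  have hlR : (0:ℝ) < l := by exact_mod_cast hm0
  have hfrac : (l:ℝ) / ((M * l : ℕ) : ℝ) = 1 / M := by push_cast; field_simp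
  have hdsub : ∀ (f : ℝ → ℝ) (c : ℝ), deriv (fun t => f (t - c)) = fun t => deriv f (t - c) := by
    intro f c; funext t; exact deriv_comp_sub_const f c t
  refine ⟨T, φ, Q, hT, h1, h2, h3, h4, h5, ?_, ?_, ?_⟩
  · intro t
    rw [hfrac]; exact h6 t
  · intro k t
    have hper : ∀ (h : ℕ) (t : ℝ), deriv Q (t - (h:ℝ) * T / M) = deriv Q t := by
      intro h
      induction h with
      | zero => intro t; simp
      | succ n ih =>
        intro t
        rw [← ih t, ← h4 (t - ((n+1 : ℕ):ℝ) * T / M)]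
        congr 1
        push_cast
        field_simp
        ring
    have := h5 (t - (((k : ℕ) / l : ℕ) : ℝ) * T / (M : ℝ))
    rw [hper] at this
    rw [hdsub, hdsub]
    exact this
  · intro t
    simp only [hdsub]
    rw [jj_sum_fin l M hm0 (fun h => deriv φ (t - (h:ℝ) * T / M)), ← mul_assoc,
      one_div_mul_eq_div, hfrac]
    exact h6 t
end

section
/- (Damped driven pendulum) Let β ≥ 0 and I > 1. Then the pendulum equation β φ'' + φ' + sin(φ) = I possesses a running solution φ₀ of some period T₀ > 0 with φ₀'(t) > 0 for all t, and φ₀ is uniquely determined by the phase condition φ₀(0) = 0: any running solution of the equation with positive derivative and value 0 at t = 0 coincides with φ₀, and has the same period T₀. -/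
open Real

/-- `φ` is a running solution of (minimal) period `T` of the damped driven pendulum
equation `β φ'' + φ' + sin φ = I`: it solves the equation on all of `ℝ`, satisfies
`φ(t + T) = φ(t) + 2π` for all `t`, and `T` is the minimal positive number with this
property. -/
def IsPendulumRunningSol (β I : ℝ) (φ : ℝ → ℝ) (T : ℝ) : Prop :=
  ContDiff ℝ 2 φ ∧
  (∀ t : ℝ, β * deriv (deriv φ) t + deriv φ t + Real.sin (φ t) = I) ∧
  0 < T ∧ (∀ t : ℝ, φ (t + T) = φ t + 2 * Real.pi) ∧
  (∀ T' : ℝ, 0 < T' → (∀ t : ℝ, φ (t + T') = φ t + 2 * Real.pi) → T ≤ T')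

/-- bounded solution operator of `u' + l u = g` -/
noncomputable def pendU (l : ℝ) (g : ℝ → ℝ) (x : ℝ) : ℝ :=
  Real.exp (-l * x) * ∫ s in Set.Iic x, Real.exp (l * s) * g s

lemma pendU_int {l B : ℝ} {g : ℝ → ℝ} (hl : 0 < l) (hg : Continuous g) (hB : ∀ x, |g x| ≤ B) (x : ℝ) :
    MeasureTheory.IntegrableOn (fun s => Real.exp (l * s) * g s) (Set.Iic x) := by
  have h := (integrableOn_exp_mul_Iic hl x)
  refine MeasureTheory.Integrable.mul_bdd (c := B) h hg.aestronglyMeasurable ?_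
  exact Filter.Eventually.of_forall hB

lemma pendU_le {l B M : ℝ} {g : ℝ → ℝ} (hl : 0 < l) (hg : Continuous g) (hB : ∀ x, |g x| ≤ B)
    (hM : ∀ x, g x ≤ l * M) (x : ℝ) : pendU l g x ≤ M := by
  have h := (integrableOn_exp_mul_Iic hl x)
  have h1 : ∫ s in Set.Iic x, Real.exp (l * s) * g s ≤ ∫ s in Set.Iic x, Real.exp (l * s) * (l * M) := by
    apply MeasureTheory.integral_mono (pendU_int hl hg hB x) (h.mul_const _)
    intro s
    exact mul_le_mul_of_nonneg_left (hM s) (Real.exp_pos _).le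
  rw [MeasureTheory.integral_mul_const, integral_exp_mul_Iic hl] at h1
  calc pendU l g x ≤ Real.exp (-l * x) * (Real.exp (l * x) / l * (l * M)) :=
        mul_le_mul_of_nonneg_left h1 (Real.exp_pos _).le
    _ = Real.exp (-l * x + l * x) * M := by rw [Real.exp_add]; field_simp
    _ = M := by simp

lemma pendU_ge {l B M : ℝ} {g : ℝ → ℝ} (hl : 0 < l) (hg : Continuous g) (hB : ∀ x, |g x| ≤ B)
    (hM : ∀ x, l * M ≤ g x) (x : ℝ) : M ≤ pendU l g x := by
  have := pendU_le (M := -M) (g := fun x => - g x) hl hg.neg (B := B) (by simpa using hB)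
    (fun x => by have := hM x; linarith) x
  simp only [pendU, mul_neg, MeasureTheory.integral_neg] at this
  simp only [pendU]
  linarith

lemma pendU_sub {l B : ℝ} {g g' : ℝ → ℝ} (hl : 0 < l) (hg : Continuous g) (hB : ∀ x, |g x| ≤ B)
    (hg' : Continuous g') (hB' : ∀ x, |g' x| ≤ B) (x : ℝ) :
    pendU l g x - pendU l g' x = pendU l (fun x => g x - g' x) x := by
  simp only [pendU, mul_sub]
  rw [MeasureTheory.integral_sub (pendU_int hl hg hB x) (pendU_int hl hg' hB' x)]
  ring

lemma pendU_deriv {l B : ℝ} {g : ℝ → ℝ} (hl : 0 < l) (hg : Continuous g) (hB : ∀ x, |g x| ≤ B)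
    (x : ℝ) : HasDerivAt (pendU l g) (-l * pendU l g x + g x) x := by
  have hc : Continuous (fun s => Real.exp (l * s) * g s) := by fun_prop
  have h1 : HasDerivAt (fun y => ∫ s in Set.Iic y, Real.exp (l * s) * g s)
      (Real.exp (l * x) * g x) x := by
    have e : (fun y => ∫ s in Set.Iic y, Real.exp (l * s) * g s) =
      fun y => (∫ s in (0:ℝ)..y, Real.exp (l * s) * g s) + ∫ s in Set.Iic 0, Real.exp (l * s) * g s := by
      ext y
      rw [← intervalIntegral.integral_Iic_sub_Iic (pendU_int hl hg hB 0) (pendU_int hl hg hB y)]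
      ring
    rw [e]
    exact (intervalIntegral.integral_hasDerivAt_right (hc.intervalIntegrable _ _)
      (hc.stronglyMeasurableAtFilter _ _) hc.continuousAt).add_const _
  have h2 : HasDerivAt (fun y => Real.exp (-l * y)) (Real.exp (-l * x) * (-l)) x := by
    simpa using ((hasDerivAt_id x).const_mul (-l)).exp
  refine HasDerivAt.congr_deriv (h2.mul h1) ?_
  have : Real.exp (-l * x) * (Real.exp (l * x) * g x) = g x := by
    rw [← mul_assoc, ← Real.exp_add]; simp
  rw [this, pendU]; ring

lemma pendU_per {l p : ℝ} {g : ℝ → ℝ} (hp : ∀ x, g (x + p) = g x) (x : ℝ) :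
    pendU l g (x + p) = pendU l g x := by
  have h := (MeasureTheory.measurePreserving_add_right MeasureTheory.volume p).setIntegral_preimage_emb
    (measurableEmbedding_addRight p) (fun s => Real.exp (l * s) * g s) (Set.Iic (x + p))
  have e : (fun s => s + p) ⁻¹' (Set.Iic (x + p)) = Set.Iic x := by ext; simp
  rw [e] at h
  simp only [pendU]
  rw [← h]
  simp only [hp, mul_add, Real.exp_add]
  have : ∀ s, Real.exp (l * s) * Real.exp (l * p) * g s = Real.exp (l * p) * (Real.exp (l * s) * g s) := by
    intro s; ring
  simp only [this]
  rw [MeasureTheory.integral_const_mul]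
  have : Real.exp (-l * p) * Real.exp (l * p) = 1 := by rw [← Real.exp_add]; simp
  linear_combination (Real.exp (-l * x) * ∫ s in Set.Iic x, Real.exp (l * s) * g s) * this

/-- right-hand side of the profile equation, shifted by `l * v` -/
noncomputable def pendG (β I l x v : ℝ) : ℝ := ((I - Real.sin x) / v - 1) / β + l * v

lemma pendG_sub {β I l x v w : ℝ} (hβ : 0 < β) (hv : 0 < v) (hw : 0 < w) :
    pendG β I l x v - pendG β I l x w = (v - w) * (l - (I - Real.sin x) / (β * v * w)) := by
  unfold pendG
  field_simp
  ring

lemma pendG_coef {β I x v w : ℝ} (hβ : 0 < β) (hI : 1 < I) (hv : I - 1 ≤ v) (hw : I - 1 ≤ w)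
    (hv' : v ≤ I + 1) (hw' : w ≤ I + 1) :
    (I - 1) / (β * (I + 1) * (I + 1)) ≤ (I - Real.sin x) / (β * v * w) ∧
    (I - Real.sin x) / (β * v * w) ≤ (I + 1) / (β * (I - 1) * (I - 1)) := by
  have h1 := Real.sin_le_one x
  have h2 := Real.neg_one_le_sin x
  have hm : 0 < I - 1 := by linarith
  have hv0 : 0 < v := by linarith
  have hw0 : 0 < w := by linarith
  constructor
  · apply div_le_div₀ (by linarith) (by linarith) (by positivity)
    gcongr
  · apply div_le_div₀ (by linarith) (by linarith) (by positivity)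
    gcongr

lemma pendG_bd {β I x v : ℝ} (hβ : 0 < β) (hI : 1 < I) (hv : I - 1 ≤ v) (hv' : v ≤ I + 1) :
    (I + 1) / (β * (I - 1) * (I - 1)) * (I - 1) ≤ pendG β I ((I + 1) / (β * (I - 1) * (I - 1))) x v ∧
    pendG β I ((I + 1) / (β * (I - 1) * (I - 1))) x v ≤ (I + 1) / (β * (I - 1) * (I - 1)) * (I + 1) := by
  have h1 := Real.sin_le_one x
  have h2 := Real.neg_one_le_sin x
  have hm : 0 < I - 1 := by linarith
  have hM : 0 < I + 1 := by linarith
  have hv0 : 0 < v := by linarith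
  set l := (I + 1) / (β * (I - 1) * (I - 1)) with hl
  have a1 := (pendG_coef (x := x) hβ hI hv le_rfl hv' (by linarith)).2
  have a2 := (pendG_coef (x := x) hβ hI hv (by linarith) hv' le_rfl).2
  have b1 := pendG_sub (I := I) (l := l) (x := x) hβ hv0 hm
  have b2 := pendG_sub (I := I) (l := l) (x := x) hβ hv0 hM
  have c1 : 0 ≤ (v - (I - 1)) * (l - (I - Real.sin x) / (β * v * (I - 1))) :=
    mul_nonneg (by linarith) (by linarith)
  have c2 : 0 ≤ ((I + 1) - v) * (l - (I - Real.sin x) / (β * v * (I + 1))) :=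
    mul_nonneg (by linarith) (by linarith)
  have d1 : l * (I - 1) ≤ pendG β I l x (I - 1) := by
    have : 0 ≤ ((I - Real.sin x) / (I - 1) - 1) / β := by
      apply div_nonneg _ hβ.le
      rw [sub_nonneg, le_div_iff₀ hm]; linarith
    unfold pendG; linarith
  have d2 : pendG β I l x (I + 1) ≤ l * (I + 1) := by
    have : ((I - Real.sin x) / (I + 1) - 1) / β ≤ 0 := by
      apply div_nonpos_of_nonpos_of_nonneg _ hβ.le
      rw [sub_nonpos, div_le_iff₀ hM]; linarith
    unfold pendG; linarith
  constructor <;> linarith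

lemma pend_profile_pos {β I : ℝ} (hβ : 0 < β) (hI : 1 < I) :
    ∃ v v' : ℝ → ℝ, (∀ x, HasDerivAt v (v' x) x) ∧ Continuous v' ∧
      (∀ x, v (x + 2 * Real.pi) = v x) ∧ (∀ x, I - 1 ≤ v x ∧ v x ≤ I + 1) ∧
      ∀ x, β * v x * v' x + v x + Real.sin x = I := by
  have hm : 0 < I - 1 := by linarith
  have hM : 0 < I + 1 := by linarith
  set l := (I + 1) / (β * (I - 1) * (I - 1)) with hl
  set c := (I - 1) / (β * (I + 1) * (I + 1)) with hc
  have hl0 : 0 < l := by positivity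
  have hc0 : 0 < c := by positivity
  have hcl : c ≤ l :=
    let h := pendG_coef (x := 0) hβ hI (le_refl (I - 1)) le_rfl (by linarith) (by linarith)
    h.1.trans h.2
  let K : Set (BoundedContinuousFunction ℝ ℝ) :=
    {v | ∀ x, (I - 1 ≤ v x ∧ v x ≤ I + 1) ∧ v (x + 2 * Real.pi) = v x}
  have hK : IsClosed K := by
    have hev : ∀ x : ℝ, Continuous fun v : BoundedContinuousFunction ℝ ℝ => v x :=
      fun x => continuous_eval_const x
    simp only [K, Set.ofPred_forall]
    refine isClosed_iInter fun x => ?_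
    exact ((isClosed_le continuous_const (hev x)).inter (isClosed_le (hev x) continuous_const)).inter
      (isClosed_eq (hev _) (hev x))
  have : CompleteSpace K := hK.completeSpace_coe
  have hne : Nonempty K := ⟨⟨BoundedContinuousFunction.const ℝ I, fun x => by
    simp⟩⟩
  -- the source term
  let g : K → ℝ → ℝ := fun v x => pendG β I l x (v.1 x)
  have hv0 : ∀ (v : K) x, 0 < v.1 x := fun v x => by have := (v.2 x).1.1; linarith
  have hgc : ∀ v, Continuous (g v) := by
    intro v
    have h1 : Continuous fun x => v.1 x := v.1.continuous
    have h2 : ∀ x, v.1 x ≠ 0 := fun x => (hv0 v x).ne'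
    simp only [g, pendG]
    fun_prop (disch := assumption)
  have hgb : ∀ v x, l * (I - 1) ≤ g v x ∧ g v x ≤ l * (I + 1) := fun v x =>
    pendG_bd hβ hI (v.2 x).1.1 (v.2 x).1.2
  have hgB : ∀ v x, |g v x| ≤ l * (I + 1) := by
    intro v x
    have := hgb v x
    have h3 : 0 < l * (I - 1) := by positivity
    rw [abs_of_nonneg (by linarith)]
    exact this.2
  have hgp : ∀ v x, g v (x + 2 * Real.pi) = g v x := by
    intro v x
    simp only [g, pendG, (v.2 x).2, Real.sin_add_two_pi]
  have hUd := fun v x => pendU_deriv hl0 (hgc v) (hgB v) x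
  have hUc : ∀ v, Continuous (pendU l (g v)) := fun v =>
    continuous_iff_continuousAt.2 fun x => (hUd v x).continuousAt
  have hUl := fun v x => pendU_le hl0 (hgc v) (hgB v) (fun x => (hgb v x).2) x
  have hUg := fun v x => pendU_ge hl0 (hgc v) (hgB v) (fun x => (hgb v x).1) x
  let S : K → K := fun v => ⟨BoundedContinuousFunction.ofNormedAddCommGroup (pendU l (g v)) (hUc v)
    (I + 1) (fun x => by
      rw [Real.norm_eq_abs, abs_of_nonneg (by linarith [hUg v x])]; exact hUl v x),
    fun x => ⟨⟨hUg v x, hUl v x⟩, pendU_per (hgp v) x⟩⟩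
  have hS : ∀ v x, (S v).1 x = pendU l (g v) x := fun v x => rfl
  have hlip : ∀ v w, dist (S v) (S w) ≤ (1 - c / l) * dist v w := by
    intro v w
    have h01 : 0 ≤ 1 - c / l := by
      rw [sub_nonneg, div_le_one hl0]; exact hcl
    rw [Subtype.dist_eq, BoundedContinuousFunction.dist_le (mul_nonneg h01 dist_nonneg)]
    intro x
    have hd : ∀ x, |g v x - g w x| ≤ l * ((1 - c / l) * dist v w) := by
      intro x
      have e : l * ((1 - c / l) * dist v w) = dist v w * (l - c) := by field_simp
      simp only [g]
      rw [pendG_sub hβ (hv0 v x) (hv0 w x), abs_mul, e]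
      have hco := pendG_coef (x := x) hβ hI (v.2 x).1.1 (w.2 x).1.1 (v.2 x).1.2 (w.2 x).1.2
      apply mul_le_mul _ _ (abs_nonneg _) dist_nonneg
      · rw [← Real.dist_eq, Subtype.dist_eq]
        exact BoundedContinuousFunction.dist_coe_le_dist x
      · rw [abs_of_nonneg (by linarith [hco.2])]
        linarith [hco.1]
    rw [hS, hS, Real.dist_eq, pendU_sub hl0 (hgc v) (hgB v) (hgc w) (hgB w), abs_le]
    have hcc : Continuous fun x => g v x - g w x := (hgc v).sub (hgc w)
    constructor
    · exact pendU_ge hl0 hcc hd (fun x => by linarith [(abs_le.1 (hd x)).1]) x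
    · exact pendU_le hl0 hcc hd (fun x => by linarith [(abs_le.1 (hd x)).2]) x
  have h01 : 0 ≤ 1 - c / l := by
    rw [sub_nonneg, div_le_one hl0]; exact hcl
  have hcon : ContractingWith (Real.toNNReal (1 - c / l)) S := by
    refine ⟨?_, LipschitzWith.of_dist_le_mul ?_⟩
    · have : 0 < c / l := by positivity
      rw [Real.toNNReal_lt_one]
      linarith
    · rw [Real.coe_toNNReal _ h01]
      exact hlip
  obtain ⟨v, hv⟩ : ∃ v, S v = v := ⟨_, hcon.fixedPoint_isFixedPt⟩
  have hv1 : (fun x => v.1 x) = pendU l (g v) := by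
    ext x; rw [← hS, hv]
  have hder : ∀ x, HasDerivAt (fun x => v.1 x) (((I - Real.sin x) / v.1 x - 1) / β) x := by
    intro x
    have := hUd v x
    rw [← hv1] at this
    refine this.congr_deriv ?_
    simp only [g, pendG]; ring
  refine ⟨fun x => v.1 x, _, hder, ?_, fun x => (v.2 x).2, fun x => (v.2 x).1, fun x => ?_⟩
  · have h1 : Continuous fun x => v.1 x := v.1.continuous
    have h2 : ∀ x, v.1 x ≠ 0 := fun x => (hv0 v x).ne'
    fun_prop (disch := assumption)
  · have := hv0 v x
    field_simp
    ring

lemma pend_profile {β I : ℝ} (hβ : 0 ≤ β) (hI : 1 < I) :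
    ∃ v v' : ℝ → ℝ, (∀ x, HasDerivAt v (v' x) x) ∧ Continuous v' ∧
      (∀ x, v (x + 2 * Real.pi) = v x) ∧ (∀ x, I - 1 ≤ v x ∧ v x ≤ I + 1) ∧
      ∀ x, β * v x * v' x + v x + Real.sin x = I := by
  rcases hβ.eq_or_lt with rfl | h
  · refine ⟨fun x => I - Real.sin x, fun x => - Real.cos x, fun x => ?_, by fun_prop, by simp, ?_, by simp⟩
    · simpa using (Real.hasDerivAt_sin x).const_sub I
    · intro x
      have h1 := Real.sin_le_one x
      have h2 := Real.neg_one_le_sin x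
      constructor <;> linarith
  · exact pend_profile_pos h hI

/-- every running solution moves along the profile -/
lemma pend_follow {β I : ℝ} (hβ : 0 ≤ β) (hI : 1 < I) {v v' : ℝ → ℝ}
    (hd : ∀ x, HasDerivAt v (v' x) x)
    (hp : ∀ x, v (x + 2 * Real.pi) = v x) (hb : ∀ x, I - 1 ≤ v x ∧ v x ≤ I + 1)
    (he : ∀ x, β * v x * v' x + v x + Real.sin x = I)
    {φ : ℝ → ℝ} {T : ℝ} (h2 : ContDiff ℝ 2 φ)
    (ho : ∀ t : ℝ, β * deriv (deriv φ) t + deriv φ t + Real.sin (φ t) = I) (hT : 0 < T)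
    (hper : ∀ t : ℝ, φ (t + T) = φ t + 2 * Real.pi) (t : ℝ) : deriv φ t = v (φ t) := by
  rcases hβ.eq_or_lt with rfl | h
  · have := ho t; have := he (φ t); linarith
  have hφ : ∀ t, HasDerivAt φ (deriv φ t) t := fun t =>
    (h2.differentiable (by norm_num) t).hasDerivAt
  have h1 : ContDiff ℝ 1 (deriv φ) := by
    have : ContDiff ℝ (1 + 1) φ := by simpa [one_add_one_eq_two] using h2
    exact (contDiff_succ_iff_deriv.1 this).2.2
  have hφ' : ∀ t, HasDerivAt (deriv φ) (deriv (deriv φ) t) t := fun t =>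
    (h1.differentiable (by norm_num) t).hasDerivAt
  set d : ℝ → ℝ := fun t => deriv φ t - v (φ t) with hdd
  set a : ℝ → ℝ := fun t => (I - Real.sin (φ t)) / (β * v (φ t)) with ha
  have hapos : ∀ t, 0 < a t := by
    intro t
    have h1 := Real.sin_le_one (φ t)
    have := (hb (φ t)).1
    exact div_pos (by linarith) (mul_pos h (by linarith))
  have hdd' : ∀ t, HasDerivAt d (- a t * d t) t := by
    intro t
    have hv0 : 0 < v (φ t) := by linarith [(hb (φ t)).1]
    have := (hφ' t).sub ((hd (φ t)).comp t (hφ t))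
    refine HasDerivAt.congr_deriv this ?_
    have e1 := ho t
    have e2 := he (φ t)
    have e3 : deriv (deriv φ) t = (I - Real.sin (φ t) - deriv φ t) / β := by
      field_simp; linarith
    have e4 : v' (φ t) = (I - Real.sin (φ t) - v (φ t)) / (β * v (φ t)) := by
      field_simp; linarith
    rw [e3, e4]
    simp only [ha, hdd]
    field_simp
    ring
  have hdp : ∀ t, d (t + T) = d t := by
    intro t
    have : deriv φ (t + T) = deriv φ t := by
      rw [← deriv_comp_add_const]
      have : (fun x => φ (x + T)) = fun x => φ x + 2 * Real.pi := funext hper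
      rw [this, deriv_add_const]
    simp only [hdd, this, hper, hp]
  have hsq : ∀ t, HasDerivAt (fun t => d t ^ 2) (-2 * a t * d t ^ 2) t := by
    intro t
    refine HasDerivAt.congr_deriv ((hdd' t).pow 2) ?_
    norm_num; ring
  have hanti : Antitone fun t => d t ^ 2 := by
    apply antitone_of_deriv_nonpos (fun t => (hsq t).differentiableAt)
    intro t
    rw [(hsq t).deriv]
    nlinarith [hapos t, mul_nonneg (hapos t).le (sq_nonneg (d t))]
  have hconst : ∀ s ∈ Set.Ioo t (t + T), d s ^ 2 = d t ^ 2 := by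
    intro s hs
    apply le_antisymm
    · exact hanti hs.1.le
    · have := hanti hs.2.le
      simpa only [hdp] using this
  set s := t + T / 2 with hsd
  have hs : s ∈ Set.Ioo t (t + T) := ⟨by linarith, by linarith⟩
  have hz : HasDerivAt (fun t => d t ^ 2) 0 s := by
    refine (hasDerivAt_const s (d t ^ 2)).congr_of_eventuallyEq ?_
    filter_upwards [isOpen_Ioo.mem_nhds hs] with r hr using hconst r hr
  have h0 := (hsq s).unique hz
  have h3 : d s ^ 2 = 0 := by
    have := hapos s
    have h4 : -2 * a s ≠ 0 := by linarith
    exact (mul_eq_zero.1 h0).resolve_left h4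
  rw [hconst s hs] at h3
  have : d t = 0 := by simpa using h3
  simp only [hdd] at this
  linarith

/-- **(Damped driven pendulum.)** For `β ≥ 0` and `I > 1` the pendulum equation
`β φ'' + φ' + sin φ = I` possesses a running solution `φ₀` of some period `T₀ > 0`
with `φ₀' > 0` everywhere, uniquely determined by the phase condition `φ₀ 0 = 0`:
any running solution with positive derivative and value `0` at `t = 0` coincides
with `φ₀` and has the same period `T₀`. -/
theorem pendulum_running_solution (β I : ℝ) (hβ : 0 ≤ β) (hI : 1 < I) :
    ∃ (φ₀ : ℝ → ℝ) (T₀ : ℝ),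
      IsPendulumRunningSol β I φ₀ T₀ ∧ (∀ t : ℝ, 0 < deriv φ₀ t) ∧ φ₀ 0 = 0 ∧
      ∀ (φ : ℝ → ℝ) (T : ℝ),
        IsPendulumRunningSol β I φ T → (∀ t : ℝ, 0 < deriv φ t) → φ 0 = 0 →
        φ = φ₀ ∧ T = T₀ := by
  obtain ⟨v, v', hd, hv'c, hp, hb, he⟩ := pend_profile hβ hI
  have hv0 : ∀ x, 0 < v x := fun x => by linarith [(hb x).1]
  have hvc : Continuous v := continuous_iff_continuousAt.2 fun x => (hd x).continuousAt
  have hic : Continuous fun x => (v x)⁻¹ := hvc.inv₀ fun x => (hv0 x).ne'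
  set H : ℝ → ℝ := fun x => ∫ s in (0:ℝ)..x, (v s)⁻¹ with hH
  have hHd : ∀ x, HasDerivAt H ((v x)⁻¹) x := fun x =>
    intervalIntegral.integral_hasDerivAt_right (hic.intervalIntegrable _ _)
      (hic.stronglyMeasurableAtFilter _ _) hic.continuousAt
  have hH0 : H 0 = 0 := by simp [hH]
  have hHm : StrictMono H := by
    apply strictMono_of_deriv_pos
    intro x
    rw [(hHd x).deriv]
    exact inv_pos.2 (hv0 x)
  have hHc : Continuous H := continuous_iff_continuousAt.2 fun x => (hHd x).continuousAt
  -- comparison with a linear function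
  have hM : 0 < (I + 1)⁻¹ := inv_pos.2 (by linarith)
  have hcmp : Monotone fun x => H x - (I + 1)⁻¹ * x := by
    have hdx : ∀ x, HasDerivAt (fun x => H x - (I + 1)⁻¹ * x) ((v x)⁻¹ - (I + 1)⁻¹ * 1) x :=
      fun x => (hHd x).sub ((hasDerivAt_id x).const_mul _)
    apply monotone_of_deriv_nonneg (fun x => (hdx x).differentiableAt)
    intro x
    rw [(hdx x).deriv, mul_one, sub_nonneg]
    exact inv_anti₀ (hv0 x) (hb x).2
  have hHtop : Filter.Tendsto H Filter.atTop Filter.atTop := by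
    refine Filter.tendsto_atTop_mono' _ ?_ (Filter.tendsto_id.const_mul_atTop hM)
    filter_upwards [Filter.eventually_ge_atTop 0] with x hx
    have := hcmp hx
    simp only [hH0] at this
    simp only [id]
    linarith
  have hHbot : Filter.Tendsto H Filter.atBot Filter.atBot := by
    refine Filter.tendsto_atBot_mono' _ ?_ (Filter.tendsto_id.const_mul_atBot hM)
    filter_upwards [Filter.eventually_le_atBot 0] with x hx
    have := hcmp hx
    simp only [hH0] at this
    simp only [id]
    linarith
  have hsurj : Function.Surjective H := hHc.surjective hHtop hHbot
  let e : ℝ ≃o ℝ := hHm.orderIsoOfSurjective H hsurj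
  set φ : ℝ → ℝ := fun t => e.symm t with hφ
  have hHφ : ∀ t, H (φ t) = t := fun t => e.apply_symm_apply t
  have hφc : Continuous φ := e.symm.continuous
  have hφd : ∀ t, HasDerivAt φ (v (φ t)) t := by
    intro t
    have := HasDerivAt.of_local_left_inverse hφc.continuousAt (hHd (φ t))
      (inv_pos.2 (hv0 _)).ne' (Filter.Eventually.of_forall hHφ)
    simpa using this
  have hφd1 : deriv φ = fun t => v (φ t) := funext fun t => (hφd t).deriv
  have hφd2 : ∀ t, HasDerivAt (deriv φ) (v' (φ t) * v (φ t)) t := by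
    intro t
    rw [hφd1]
    exact (hd (φ t)).comp t (hφd t)
  have hφ2 : ContDiff ℝ 2 φ := by
    rw [show (2 : WithTop ℕ∞) = 1 + 1 from one_add_one_eq_two.symm, contDiff_succ_iff_deriv]
    refine ⟨fun t => (hφd t).differentiableAt, by simp, ?_⟩
    rw [contDiff_one_iff_deriv]
    refine ⟨fun t => (hφd2 t).differentiableAt, ?_⟩
    rw [funext fun t => (hφd2 t).deriv]
    fun_prop
  have hode : ∀ t : ℝ, β * deriv (deriv φ) t + deriv φ t + Real.sin (φ t) = I := by
    intro t
    rw [(hφd2 t).deriv, (hφd t).deriv, ← he (φ t)]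
    ring
  have hφ0 : φ 0 = 0 := hHm.injective (by rw [hHφ, hH0])
  have hHp : ∀ x, H (x + 2 * Real.pi) = H x + H (2 * Real.pi) := by
    intro x
    have hdx : ∀ x, HasDerivAt (fun x => H (x + 2 * Real.pi) - H x) 0 x := by
      intro x
      have := ((hHd (x + 2 * Real.pi)).comp_add_const x (2 * Real.pi)).sub (hHd x)
      refine HasDerivAt.congr_deriv this ?_
      rw [hp, sub_self]
    have := is_const_of_deriv_eq_zero (fun x => (hdx x).differentiableAt)
      (fun x => (hdx x).deriv) x 0
    simp only [zero_add, hH0] at this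
    linarith
  have hT0 : 0 < H (2 * Real.pi) := by
    rw [← hH0]; exact hHm (by positivity)
  have hφp : ∀ t, φ (t + H (2 * Real.pi)) = φ t + 2 * Real.pi := by
    intro t
    apply hHm.injective
    rw [hHφ, hHp, hHφ]
  refine ⟨φ, H (2 * Real.pi), ⟨hφ2, hode, hT0, hφp, ?_⟩, ?_, hφ0, ?_⟩
  · intro T' _ hT'
    have := hT' 0
    rw [zero_add, hφ0, zero_add] at this
    rw [← this, hHφ]
  · intro t
    rw [(hφd t).deriv]; exact hv0 _
  · rintro ψ T ⟨h1, h2, h3, h4, h5⟩ _ hψ0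
    have hf := pend_follow hβ hI hd hp hb he h1 h2 h3 h4
    have hψd : ∀ t, HasDerivAt ψ (v (ψ t)) t := fun t => by
      rw [← hf t]; exact (h1.differentiable (by norm_num) t).hasDerivAt
    have hdx : ∀ t, HasDerivAt (fun t => H (ψ t) - t) 0 t := by
      intro t
      have := ((hHd (ψ t)).comp t (hψd t)).sub (hasDerivAt_id t)
      refine HasDerivAt.congr_deriv this ?_
      rw [inv_mul_cancel₀ (hv0 _).ne', sub_self]
    have hψφ : ψ = φ := by
      funext t
      apply hHm.injective
      have := is_const_of_deriv_eq_zero (fun x => (hdx x).differentiableAt)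
        (fun x => (hdx x).deriv) t 0
      simp only [hψ0, hH0] at this
      rw [hHφ]
      linarith
    refine ⟨hψφ, ?_⟩
    subst hψφ
    apply le_antisymm (h5 _ hT0 hφp)
    have := h4 0
    rw [zero_add, hψ0, zero_add] at this
    rw [← this, hHφ]
end
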